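/- arXiv:quant-ph/0511149 — 3 statements merged into one kernel-verified Lean document; each statement's English description precedes it below -/
import Mathlib

section
/- Let G be a finite group, let (σ_j)_{j∈J} be a complete family of irreducibles for G, let M ⊆ G be a conjugacy class of involutions with representative m₀, let k ≥ 1, let (ρ_i)_{i∈T} be a complete family of irreducibles for G^k acting on spaces V_i of dimensions d_i, and for each i let B_i be an orthonormal basis of V_i. Let Λ ⊆ J, P(Λ) = Σ_{j∈Λ} d_j²/|G|, and let λ ≥ 0 be a real number with |χ_j(m₀)| ≤ λ·d_j for every j ∈ J \ Λ. Then Σ_{i∈T} (d_i²/|G|^k) · (1/d_i) Σ_{b∈B_i} | (1/|M|) Σ_{m∈M} ‖Π_m^{(i)} b‖² − 2^{-k} | ≤ λ + P(Λ), where Π_m^{(i)} = 2^{-k} Σ_{I ⊆ {1,…,k}} ρ_i(m^I). -/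
noncomputable section

open scoped BigOperators InnerProductSpace

def IsUnitaryRep {G V : Type*} [Group G] [NormedAddCommGroup V] [InnerProductSpace ℂ V]
    (ρ : Representation ℂ G V) : Prop :=
  ∀ (g : G) (v w : V), ⟪ρ g v, ρ g w⟫_ℂ = ⟪v, w⟫_ℂ

def IsIrreducibleRep {G V : Type*} [Group G] [AddCommGroup V] [Module ℂ V]
    (ρ : Representation ℂ G V) : Prop :=
  (∃ v : V, v ≠ 0) ∧
    ∀ W : Submodule ℂ V, (∀ (g : G) (v : V), v ∈ W → ρ g v ∈ W) → W = ⊥ ∨ W = ⊤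

def RepIso {G V₁ V₂ : Type*} [Group G] [AddCommGroup V₁] [Module ℂ V₁]
    [AddCommGroup V₂] [Module ℂ V₂]
    (ρ₁ : Representation ℂ G V₁) (ρ₂ : Representation ℂ G V₂) : Prop :=
  ∃ e : V₁ ≃ₗ[ℂ] V₂, ∀ (g : G) (v : V₁), e (ρ₁ g v) = ρ₂ g (e v)

def repChar {G V : Type*} [Group G] [AddCommGroup V] [Module ℂ V]
    (ρ : Representation ℂ G V) (g : G) : ℂ := LinearMap.trace ℂ V (ρ g)

def IsCompleteFamily {G : Type*} [Group G] {J : Type*}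
    (W : J → Type*) [∀ j, NormedAddCommGroup (W j)] [∀ j, InnerProductSpace ℂ (W j)]
    [∀ j, FiniteDimensional ℂ (W j)]
    (σ : ∀ j, Representation ℂ G (W j)) : Prop :=
  (∀ j, IsUnitaryRep (σ j)) ∧ (∀ j, IsIrreducibleRep (σ j)) ∧
    (∀ j j', j ≠ j' → ¬ RepIso (σ j) (σ j')) ∧
    (∀ (U : Type) [AddCommGroup U] [Module ℂ U] [FiniteDimensional ℂ U]
      (τ : Representation ℂ G U), IsIrreducibleRep τ → ∃ j, RepIso τ (σ j))

def isoProj {G V : Type*} [Group G] [Fintype G] [AddCommGroup V] [Module ℂ V]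
    (d : ℕ) (χ : G → ℂ) (ρ : Representation ℂ G V) : V →ₗ[ℂ] V :=
  ((d : ℂ) / (Fintype.card G : ℂ)) • ∑ g : G, starRingEnd ℂ (χ g) • (ρ g : V →ₗ[ℂ] V)

def onI {G : Type*} [One G] {k : ℕ} (g : G) (I : Finset (Fin k)) : Fin k → G :=
  fun i => if i ∈ I then g else 1

def invProj {G V : Type*} [Group G] [AddCommGroup V] [Module ℂ V] {k : ℕ}
    (ρ : Representation ℂ (Fin k → G) V) (m : G) : V →ₗ[ℂ] V :=
  ((2 : ℂ) ^ k)⁻¹ • ∑ I : Finset (Fin k), (ρ (onI m I) : V →ₗ[ℂ] V)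

def isoProjI {G V : Type*} [Group G] [Fintype G] [AddCommGroup V] [Module ℂ V] {k : ℕ}
    (ρ : Representation ℂ (Fin k → G) V) (d : ℕ) (χ : G → ℂ) (I : Finset (Fin k)) :
    V →ₗ[ℂ] V :=
  ((d : ℂ) / (Fintype.card G : ℂ)) • ∑ g : G, starRingEnd ℂ (χ g) • (ρ (onI g I) : V →ₗ[ℂ] V)

open Representation in
lemma irr_mathlib {G V : Type*} [Group G] [AddCommGroup V] [Module ℂ V]
    {ρ : Representation ℂ G V} (h : IsIrreducibleRep ρ) : ρ.IsIrreducible := by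
  obtain ⟨⟨v, hv⟩, h⟩ := h
  have : Nontrivial (Subrepresentation ρ) := by
    refine ⟨⊥, ⊤, fun e => hv ?_⟩
    have : v ∈ (⊤ : Subrepresentation ρ).toSubmodule := Submodule.mem_top
    rw [← e] at this
    exact (Submodule.mem_bot ℂ).1 this
  refine ⟨fun W => ?_⟩
  rcases h W.toSubmodule (fun g v hv => W.apply_mem_toSubmodule g hv) with e | e
  · left; apply Subrepresentation.toSubmodule_injective; exact e
  · right; apply Subrepresentation.toSubmodule_injective; exact e

lemma schur' {G V : Type*} [Group G] [AddCommGroup V] [Module ℂ V] [FiniteDimensional ℂ V]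
    {ρ : Representation ℂ G V} (h : IsIrreducibleRep ρ) (f : V →ₗ[ℂ] V)
    (hf : ∀ g v, f (ρ g v) = ρ g (f v)) :
    f = (LinearMap.trace ℂ V f / (Module.finrank ℂ V : ℂ)) • LinearMap.id := by
  obtain ⟨⟨v, hv⟩, h⟩ := h
  have : Nontrivial V := ⟨v, 0, hv⟩
  obtain ⟨c, hc⟩ := Module.End.exists_eigenvalue f
  have key : f = c • LinearMap.id := by
    rcases h (Module.End.eigenspace f c) (fun g v hv => by
      rw [Module.End.mem_eigenspace_iff] at hv ⊢
      rw [hf, hv, map_smul]) with e | e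
    · exact absurd e hc
    · ext w
      have : w ∈ Module.End.eigenspace f c := by rw [e]; trivial
      simpa using Module.End.mem_eigenspace_iff.1 this
  have hd : (Module.finrank ℂ V : ℂ) ≠ 0 := by
    exact_mod_cast (Module.finrank_pos (R := ℂ) (M := V)).ne'
  have : LinearMap.trace ℂ V f = c * Module.finrank ℂ V := by
    rw [key]; simp
  rw [this, mul_div_cancel_right₀ _ hd, ← key]

lemma finrank_ne {G V : Type*} [Group G] [AddCommGroup V] [Module ℂ V] [FiniteDimensional ℂ V]
    {ρ : Representation ℂ G V} (h : IsIrreducibleRep ρ) : (Module.finrank ℂ V : ℂ) ≠ 0 := by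
  obtain ⟨⟨v, hv⟩, h⟩ := h
  have : Nontrivial V := ⟨v, 0, hv⟩
  exact_mod_cast (Module.finrank_pos (R := ℂ) (M := V)).ne'

lemma class_act {G V : Type*} [Group G] [Fintype G] [AddCommGroup V] [Module ℂ V]
    [FiniteDimensional ℂ V]
    {ρ : Representation ℂ G V} (h : IsIrreducibleRep ρ) (f : G → ℂ)
    (hf : ∀ g x, f (x * g * x⁻¹) = f g) :
    ∑ g, f g • (ρ g : V →ₗ[ℂ] V) =
      ((∑ g, f g * repChar ρ g) / (Module.finrank ℂ V : ℂ)) • LinearMap.id := by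
  rw [schur' h (∑ g, f g • (ρ g : V →ₗ[ℂ] V))]
  · congr 2
    simp [repChar]
  · intro x v
    simp only [LinearMap.sum_apply, LinearMap.smul_apply, map_sum, map_smul]
    rw [← Equiv.sum_comp (MulAut.conj x).toEquiv]
    refine Finset.sum_congr rfl fun g _ => ?_
    have : (MulAut.conj x).toEquiv g = x * g * x⁻¹ := rfl
    rw [this, hf, ← Module.End.mul_apply, ← map_mul, ← Module.End.mul_apply, ← map_mul]
    simp

lemma repChar_one' {G V : Type*} [Group G] [AddCommGroup V] [Module ℂ V] [FiniteDimensional ℂ V]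
    (ρ : Representation ℂ G V) : repChar ρ 1 = Module.finrank ℂ V := Representation.char_one ρ

lemma repChar_conj' {G V : Type*} [Group G] [AddCommGroup V] [Module ℂ V] [FiniteDimensional ℂ V]
    (ρ : Representation ℂ G V) (g h : G) : repChar ρ (h * g * h⁻¹) = repChar ρ g :=
  Representation.char_conj ρ g h

open scoped MonoidAlgebra in
def modRep {G : Type*} [Group G] (X : Type*) [AddCommGroup X] [Module ℂ X] [Module ℂ[G] X]
    [IsScalarTower ℂ ℂ[G] X] : Representation ℂ G X where
  toFun g :=
    { toFun := fun v => MonoidAlgebra.of ℂ G g • v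
      map_add' := fun a b => smul_add _ a b
      map_smul' := fun c v => by
        have : SMulCommClass ℂ ℂ[G] X := IsScalarTower.to_smulCommClass
        exact (smul_comm c (MonoidAlgebra.of ℂ G g) v).symm }
  map_one' := by
    ext v
    change MonoidAlgebra.of ℂ G 1 • v = v
    rw [map_one, one_smul]
  map_mul' x y := by
    ext v
    change MonoidAlgebra.of ℂ G (x * y) • v =
      MonoidAlgebra.of ℂ G x • MonoidAlgebra.of ℂ G y • v
    rw [map_mul, mul_smul]

open scoped MonoidAlgebra in
lemma modRep_irr {G : Type*} [Group G] (X : Type*) [AddCommGroup X] [Module ℂ X] [Module ℂ[G] X]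
    [IsScalarTower ℂ ℂ[G] X] [IsSimpleModule ℂ[G] X] :
    IsIrreducibleRep (modRep (G := G) X) := by
  have := IsSimpleModule.nontrivial ℂ[G] X
  refine ⟨exists_ne 0, fun S hS => ?_⟩
  let S' : Submodule ℂ[G] X :=
    { S with
      smul_mem' := fun c x hx => by
        change c • x ∈ S
        induction c using MonoidAlgebra.induction_on with
        | of g => exact hS g x hx
        | add p q hp hq => rw [add_smul]; exact S.add_mem hp hq
        | smul r p hp => rw [smul_assoc]; exact S.smul_mem r hp }
  have hm : ∀ x, x ∈ S' ↔ x ∈ S := fun x => Iff.rfl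
  rcases eq_bot_or_eq_top S' with q | q
  · left; ext x; rw [← hm, q]; simp
  · right; ext x; rw [← hm, q]; simp

section fam
variable {G : Type*} [Group G] [Fintype G]
    {J : Type*} [Fintype J]
    {W : J → Type*} [∀ j, NormedAddCommGroup (W j)] [∀ j, InnerProductSpace ℂ (W j)]
    [∀ j, FiniteDimensional ℂ (W j)]
    {σ : ∀ j, Representation ℂ G (W j)}

lemma fam_orth [DecidableEq J] (hfam : IsCompleteFamily W σ) (i j : J) :
    ∑ g, repChar (σ i) g * repChar (σ j) g⁻¹ = if i = j then (Fintype.card G : ℂ) else 0 := by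
  have h1 := irr_mathlib (hfam.2.1 i)
  have h2 := irr_mathlib (hfam.2.1 j)
  have hc : (Nat.card G : ℂ) ≠ 0 := by simp
  let _ := invertibleOfNonzero hc
  have := Representation.char_orthonormal (σ i) (σ j)
  rw [inv_mul_eq_iff_eq_mul₀ hc] at this
  have h3 : ∑ g, repChar (σ i) g * repChar (σ j) g⁻¹ =
    ∑ g, (σ i).character g * (σ j).character g⁻¹ := rfl
  rw [h3, this]
  by_cases h : i = j
  · subst h
    rw [if_pos ⟨Representation.Equiv.refl _⟩, if_pos rfl]
    simp
  · rw [if_neg, if_neg h]; · simp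
    rintro ⟨e⟩
    exact hfam.2.2.1 j i (Ne.symm h) ⟨e.toLinearEquiv, fun g v => by
      exact LinearMap.congr_fun (e.toIntertwiningMap.isIntertwining' g) v⟩

lemma fam_any (hfam : IsCompleteFamily W σ) {U : Type*} [AddCommGroup U] [Module ℂ U]
    [FiniteDimensional ℂ U] (τ : Representation ℂ G U) (h : IsIrreducibleRep τ) :
    ∃ j, RepIso τ (σ j) := by
  let e := (Module.finBasis ℂ U).equivFun
  let τ' : Representation ℂ G (Fin (Module.finrank ℂ U) → ℂ) :=
    { toFun := fun g => e.conj (τ g)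
      map_one' := by ext; simp [LinearEquiv.conj_apply]
      map_mul' := fun a b => by ext; simp [LinearEquiv.conj_apply] }
  have h' : IsIrreducibleRep τ' := by
    obtain ⟨⟨v, hv⟩, h⟩ := h
    refine ⟨⟨e v, by simpa using hv⟩, fun S hS => ?_⟩
    rcases h (S.comap e.toLinearMap) (fun g v hv => by
      have := hS g (e v) hv
      simpa [τ', LinearEquiv.conj_apply] using this) with q | q
    · left
      rw [eq_bot_iff]; intro x hx
      have : e.symm x ∈ S.comap e.toLinearMap := by simpa using hx
      rw [q] at this
      simpa using this
    · right
      rw [eq_top_iff]; intro x hx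
      have : e.symm x ∈ S.comap e.toLinearMap := by rw [q]; trivial
      simpa using this
  obtain ⟨j, e', he'⟩ := hfam.2.2.2 _ τ' h'
  refine ⟨j, e.trans e', fun g v => ?_⟩
  have := he' g (e v)
  simpa [τ', LinearEquiv.conj_apply] using this

open scoped MonoidAlgebra in
lemma fam_zero (hfam : IsCompleteFamily W σ) (f : G → ℂ)
    (hf : ∀ j, ∑ g, f g • (σ j g : W j →ₗ[ℂ] W j) = 0) : f = 0 := by
  let a : ℂ[G] := ∑ g, f g • MonoidAlgebra.of ℂ G g
  have ha : a ∈ Ring.jacobson ℂ[G] := by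
    rw [Ring.jacobson, Module.jacobson, Submodule.mem_sInf]
    intro I hI
    have hs : IsSimpleModule ℂ[G] (ℂ[G] ⧸ I) := isSimpleModule_iff_isCoatom.2 hI
    have : FiniteDimensional ℂ ℂ[G] := inferInstance
    have : FiniteDimensional ℂ (ℂ[G] ⧸ I) := 
      Module.Finite.of_surjective ((Submodule.mkQ I).restrictScalars ℂ) (Submodule.mkQ_surjective I)
    obtain ⟨j, e, he⟩ := fam_any hfam (modRep (G := G) (ℂ[G] ⧸ I)) (modRep_irr _)
    have h0 : a • (Submodule.Quotient.mk 1 : ℂ[G] ⧸ I) = 0 := by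
      apply e.injective
      have := LinearMap.congr_fun (hf j) (e (Submodule.Quotient.mk 1))
      simp only [LinearMap.sum_apply, LinearMap.smul_apply, ← he, ← map_smul, ← map_sum] at this
      rw [map_zero]
      rw [LinearMap.zero_apply] at this
      rw [← this]
      simp only [map_smul]
      simp only [a, Finset.sum_smul, smul_assoc]
      rfl
    rw [← Submodule.Quotient.mk_smul, Submodule.Quotient.mk_eq_zero] at h0
    simpa using h0
  rw [IsSemisimpleRing.jacobson_eq_bot] at ha
  have ha : a = 0 := by simpa using ha
  ext g
  have : a.coeff g = f g := by
    classical
    simp [a, Finsupp.single_apply]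
  rw [← this, ha]; rfl

lemma fam_reg [DecidableEq G] (hfam : IsCompleteFamily W σ) (g : G) :
    ∑ j, (Module.finrank ℂ (W j) : ℂ) * repChar (σ j) g =
      if g = 1 then (Fintype.card G : ℂ) else 0 := by
  classical
  let f : G → ℂ := fun g => ∑ j, (Module.finrank ℂ (W j) : ℂ) * repChar (σ j) g⁻¹ -
      if g = 1 then (Fintype.card G : ℂ) else 0
  have : f = 0 := by
    refine fam_zero hfam f fun j => ?_
    rw [class_act (hfam.2.1 j)]
    · have : ∑ g, f g * repChar (σ j) g = 0 := by
        simp only [f, sub_mul, Finset.sum_sub_distrib, Finset.sum_mul]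
        rw [Finset.sum_comm]
        have : ∀ x, ∑ g, (Module.finrank ℂ (W x) : ℂ) * repChar (σ x) g⁻¹ * repChar (σ j) g =
          (Module.finrank ℂ (W x) : ℂ) * if j = x then (Fintype.card G : ℂ) else 0 := by
          intro x
          rw [← fam_orth hfam, Finset.mul_sum]
          exact Finset.sum_congr rfl fun _ _ => by ring
        simp only [this]
        simp [repChar_one', mul_comm]
      rw [this]; simp
    · intro g x
      have h1 : (x * g * x⁻¹)⁻¹ = x * g⁻¹ * x⁻¹ := by group
      simp only [f, h1, repChar_conj']
      simp
  have := congrFun this g⁻¹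
  simpa [f, sub_eq_zero] using this
end fam

section unit
variable {G V : Type*} [Group G] [NormedAddCommGroup V] [InnerProductSpace ℂ V]
  {ρ : Representation ℂ G V}

lemma unitary_adj (h : IsUnitaryRep ρ) (g : G) (v w : V) : ⟪ρ g v, w⟫_ℂ = ⟪v, ρ g⁻¹ w⟫_ℂ := by
  rw [← h g v (ρ g⁻¹ w), ← Module.End.mul_apply, ← map_mul]
  simp

lemma unitary_norm (h : IsUnitaryRep ρ) (g : G) (v : V) : ‖ρ g v‖ = ‖v‖ := by
  rw [@norm_eq_sqrt_re_inner ℂ, h g v v, ← @norm_eq_sqrt_re_inner ℂ]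

lemma char_star [FiniteDimensional ℂ V] (h : IsUnitaryRep ρ) (g : G) :
    starRingEnd ℂ (repChar ρ g) = repChar ρ g⁻¹ := by
  rw [repChar, repChar, LinearMap.trace_eq_sum_inner _ (stdOrthonormalBasis ℂ V),
    LinearMap.trace_eq_sum_inner _ (stdOrthonormalBasis ℂ V), map_sum]
  refine Finset.sum_congr rfl fun i _ => ?_
  rw [inner_conj_symm, unitary_adj h]

lemma char_le [FiniteDimensional ℂ V] (h : IsUnitaryRep ρ) (g : G) :
    ‖repChar ρ g‖ ≤ Module.finrank ℂ V := by
  rw [repChar, LinearMap.trace_eq_sum_inner _ (stdOrthonormalBasis ℂ V)]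
  refine (norm_sum_le _ _).trans ?_
  refine (Finset.sum_le_card_nsmul _ _ 1 fun i _ => ?_).trans (by simp)
  refine (norm_inner_le_norm _ _).trans ?_
  rw [unitary_norm h]; simp

end unit

lemma char_conv {G V : Type*} [Group G] [Fintype G] [AddCommGroup V] [Module ℂ V]
    [FiniteDimensional ℂ V]
    {ρ : Representation ℂ G V} (h : IsIrreducibleRep ρ) (f : G → ℂ)
    (hf : ∀ g x, f (x * g * x⁻¹) = f g) (y : G) :
    ∑ g, f g * repChar ρ (y * g) =
      ((∑ g, f g * repChar ρ g) / (Module.finrank ℂ V : ℂ)) * repChar ρ y := by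
  have := congrArg (fun A => LinearMap.trace ℂ V (ρ y * A)) (class_act h f hf)
  simpa [Finset.mul_sum, ← map_mul, repChar, mul_smul_comm, ← Module.End.one_eq_id] using this

lemma class_isoProj {G V U : Type*} [Group G] [Fintype G]
    [NormedAddCommGroup V] [InnerProductSpace ℂ V]
    [FiniteDimensional ℂ V] [AddCommGroup U] [Module ℂ U]
    {ρ : Representation ℂ G V} (h : IsIrreducibleRep ρ) (hu : IsUnitaryRep ρ)
    (τ : Representation ℂ G U) (f : G → ℂ)
    (hf : ∀ g x, f (x * g * x⁻¹) = f g) (d : ℕ) :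
    (∑ g, f g • (τ g : U →ₗ[ℂ] U)) * isoProj d (repChar ρ) τ =
      ((∑ g, f g * repChar ρ g) / (Module.finrank ℂ V : ℂ)) • isoProj d (repChar ρ) τ := by
  unfold isoProj
  rw [mul_smul_comm, smul_comm]
  congr 1
  rw [Finset.sum_mul]
  have : ∀ g, f g • τ g * ∑ x, (starRingEnd ℂ) (repChar ρ x) • τ x =
      ∑ x, (f g * repChar ρ (x⁻¹ * g)) • τ x := by
    intro g
    rw [Finset.mul_sum, ← Equiv.sum_comp (Equiv.mulLeft g⁻¹)]
    refine Finset.sum_congr rfl fun x _ => ?_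
    rw [smul_mul_smul_comm, ← map_mul, char_star hu]
    simp
  simp only [this]
  rw [Finset.sum_comm]
  simp only [← Finset.sum_smul]
  rw [Finset.smul_sum]
  refine Finset.sum_congr rfl fun x _ => ?_
  rw [char_conv h f hf, smul_smul, char_star hu]

section fam
variable {G : Type*} [Group G] [Fintype G]
    {J : Type*} [Fintype J]
    {W : J → Type*} [∀ j, NormedAddCommGroup (W j)] [∀ j, InnerProductSpace ℂ (W j)]
    [∀ j, FiniteDimensional ℂ (W j)]
    {σ : ∀ j, Representation ℂ G (W j)}

/-- Isotypic projection for member j. -/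
def PP (σ : ∀ j, Representation ℂ G (W j)) {U : Type*} [AddCommGroup U] [Module ℂ U]
    (τ : Representation ℂ G U) (j : J) : U →ₗ[ℂ] U :=
  isoProj (Module.finrank ℂ (W j)) (repChar (σ j)) τ

lemma PP_sum (hfam : IsCompleteFamily W σ) {U : Type*} [AddCommGroup U] [Module ℂ U]
    (τ : Representation ℂ G U) : ∑ j, PP σ τ j = 1 := by
  classical
  have hc : (Fintype.card G : ℂ) ≠ 0 := by simp
  simp only [PP, isoProj, Finset.smul_sum, smul_smul]
  rw [Finset.sum_comm]
  have : ∀ g, ∑ j, ((Module.finrank ℂ (W j) : ℂ) / (Fintype.card G : ℂ) *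
      starRingEnd ℂ (repChar (σ j) g)) • (τ g : U →ₗ[ℂ] U) = if g = 1 then 1 else 0 := by
    intro g
    rw [← Finset.sum_smul]
    have h1 : ∑ j, ((Module.finrank ℂ (W j) : ℂ) / (Fintype.card G : ℂ) *
      starRingEnd ℂ (repChar (σ j) g)) = (∑ j, (Module.finrank ℂ (W j) : ℂ) * repChar (σ j) g⁻¹)
        / (Fintype.card G : ℂ) := by
      rw [Finset.sum_div]
      refine Finset.sum_congr rfl fun j _ => ?_
      rw [char_star (hfam.1 j)]; ring
    rw [h1, fam_reg hfam]
    by_cases hg : g = 1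
    · simp [hg]
    · simp [hg]
  simp only [this]
  simp

lemma PP_idem (hfam : IsCompleteFamily W σ) {U : Type*} [AddCommGroup U] [Module ℂ U]
    (τ : Representation ℂ G U) (j : J) : PP σ τ j * PP σ τ j = PP σ τ j := by
  classical
  have hc : (Fintype.card G : ℂ) ≠ 0 := by simp
  have h := class_isoProj (hfam.2.1 j) (hfam.1 j) τ (fun g => starRingEnd ℂ (repChar (σ j) g))
    (fun g x => by rw [repChar_conj']) (Module.finrank ℂ (W j))
  have h2 : ∑ g, starRingEnd ℂ (repChar (σ j) g) * repChar (σ j) g = Fintype.card G := by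
    have := fam_orth hfam j j
    rw [if_pos rfl] at this
    rw [← this]
    refine Finset.sum_congr rfl fun g _ => ?_
    rw [char_star (hfam.1 j), mul_comm]
  rw [h2] at h
  have h3 : PP σ τ j = ((Module.finrank ℂ (W j) : ℂ) / (Fintype.card G : ℂ)) •
    ∑ g, starRingEnd ℂ (repChar (σ j) g) • (τ g : U →ₗ[ℂ] U) := rfl
  have hd := finrank_ne (hfam.2.1 j)
  change _ * PP σ τ j = _ • PP σ τ j at h
  nth_rewrite 1 [h3]
  rw [smul_mul_assoc, h, smul_smul]
  field_simp
  simp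

lemma PP_symm (hfam : IsCompleteFamily W σ) {U : Type*} [NormedAddCommGroup U]
    [InnerProductSpace ℂ U] {τ : Representation ℂ G U} (hτ : IsUnitaryRep τ) (j : J) (v w : U) :
    ⟪PP σ τ j v, w⟫_ℂ = ⟪v, PP σ τ j w⟫_ℂ := by
  simp only [PP, isoProj, LinearMap.smul_apply, LinearMap.sum_apply, inner_smul_left,
    inner_smul_right, sum_inner, inner_sum]
  congr 1
  · simp
  rw [← Equiv.sum_comp (Equiv.inv G)]
  refine Finset.sum_congr rfl fun g _ => ?_
  simp only [Equiv.inv_apply, unitary_adj hτ, inv_inv]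
  rw [char_star (hfam.1 j), char_star (hfam.1 j), char_star (hfam.1 j)]
  simp

lemma PP_inner (hfam : IsCompleteFamily W σ) {U : Type*} [NormedAddCommGroup U]
    [InnerProductSpace ℂ U] {τ : Representation ℂ G U} (hτ : IsUnitaryRep τ) (j : J) (v : U) :
    ⟪v, PP σ τ j v⟫_ℂ = ((‖PP σ τ j v‖ ^ 2 : ℝ) : ℂ) := by
  conv_lhs => rw [← PP_idem hfam τ j, Module.End.mul_apply, ← PP_symm hfam hτ]
  rw [inner_self_eq_norm_sq_to_K]; simp

lemma PP_norm_sum (hfam : IsCompleteFamily W σ) {U : Type*} [NormedAddCommGroup U]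
    [InnerProductSpace ℂ U] {τ : Representation ℂ G U} (hτ : IsUnitaryRep τ) (v : U) :
    ∑ j, ‖PP σ τ j v‖ ^ 2 = ‖v‖ ^ 2 := by
  have : (((∑ j, ‖PP σ τ j v‖ ^ 2 : ℝ)) : ℂ) = ((‖v‖ ^ 2 : ℝ) : ℂ) := by
    rw [Complex.ofReal_sum]
    simp only [← PP_inner hfam hτ]
    rw [← inner_sum, ← LinearMap.sum_apply, PP_sum hfam, Module.End.one_apply,
      inner_self_eq_norm_sq_to_K]
    simp
  exact_mod_cast this

lemma avg_bound (hfam : IsCompleteFamily W σ) (M : Finset G) (m₀ : G) (hm₀M : m₀ ∈ M)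
    (hM : ∀ m : G, m ∈ M ↔ IsConj m₀ m)
    (Λ : Finset J) (lam : ℝ) (hlam : 0 ≤ lam)
    (hΛ : ∀ j ∉ Λ, ‖repChar (σ j) m₀‖ ≤ lam * (Module.finrank ℂ (W j) : ℝ))
    {U : Type*} [NormedAddCommGroup U]
    [InnerProductSpace ℂ U] {τ : Representation ℂ G U} (hτ : IsUnitaryRep τ) (v : U) :
    ‖(M.card : ℂ)⁻¹ * ∑ m ∈ M, ⟪v, τ m v⟫_ℂ‖ ≤
      lam * ‖v‖ ^ 2 + ∑ j ∈ Λ, ‖PP σ τ j v‖ ^ 2 := by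
  classical
  have hMc : (M.card : ℂ) ≠ 0 := by
    simpa using Finset.ne_empty_of_mem hm₀M
  let f : G → ℂ := fun g => if g ∈ M then (M.card : ℂ)⁻¹ else 0
  have hf : ∀ g x, f (x * g * x⁻¹) = f g := by
    intro g x
    have : x * g * x⁻¹ ∈ M ↔ g ∈ M := by
      rw [hM, hM]
      have h1 : IsConj g (x * g * x⁻¹) := isConj_iff.2 ⟨x, rfl⟩
      exact ⟨fun h => h.trans h1.symm, fun h => h.trans h1⟩
    simp only [f, this]
  have hχ : ∀ j, ∑ g, f g * repChar (σ j) g = repChar (σ j) m₀ := by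
    intro j
    have h1 : ∀ m ∈ M, repChar (σ j) m = repChar (σ j) m₀ := by
      intro m hm
      obtain ⟨x, rfl⟩ := isConj_iff.1 ((hM m).1 hm)
      exact repChar_conj' _ _ _
    simp only [f, ite_mul, zero_mul, Finset.sum_ite_mem, Finset.univ_inter]
    rw [← Finset.mul_sum, Finset.sum_congr rfl h1]
    simp [hMc]
  have h1 : (M.card : ℂ)⁻¹ * ∑ m ∈ M, ⟪v, τ m v⟫_ℂ =
      ⟪v, (∑ g, f g • (τ g : U →ₗ[ℂ] U)) v⟫_ℂ := by
    simp [f, LinearMap.sum_apply, inner_sum, inner_smul_right, Finset.sum_ite_mem, ite_smul,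
      Finset.mul_sum]
  have h2 : ∑ g, f g • (τ g : U →ₗ[ℂ] U) =
      ∑ j, (repChar (σ j) m₀ / (Module.finrank ℂ (W j) : ℂ)) • PP σ τ j := by
    calc _ = (∑ g, f g • (τ g : U →ₗ[ℂ] U)) * ∑ j, PP σ τ j := by rw [PP_sum hfam, mul_one]
      _ = _ := by
        rw [Finset.mul_sum]
        refine Finset.sum_congr rfl fun j _ => ?_
        rw [PP, class_isoProj (hfam.2.1 j) (hfam.1 j) τ f hf, hχ]
  rw [h1, h2, LinearMap.sum_apply, inner_sum]
  refine (norm_sum_le _ _).trans ?_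
  have h3 : ∀ j, ‖⟪v, ((repChar (σ j) m₀ / (Module.finrank ℂ (W j) : ℂ)) • PP σ τ j) v⟫_ℂ‖ ≤
      lam * ‖PP σ τ j v‖ ^ 2 + if j ∈ Λ then ‖PP σ τ j v‖ ^ 2 else 0 := by
    intro j
    rw [LinearMap.smul_apply, inner_smul_right, PP_inner hfam hτ, norm_mul, Complex.norm_real,
      norm_div, Real.norm_of_nonneg (sq_nonneg _), Complex.norm_natCast]
    have hd : (0 : ℝ) < Module.finrank ℂ (W j) := by
      have := finrank_ne (hfam.2.1 j)
      exact_mod_cast Nat.pos_of_ne_zero (by exact_mod_cast this)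
    have hs := sq_nonneg ‖PP σ τ j v‖
    split_ifs with hj
    · have : ‖repChar (σ j) m₀‖ / (Module.finrank ℂ (W j) : ℝ) ≤ 1 := by
        rw [div_le_one hd]; exact char_le (hfam.1 j) m₀
      nlinarith [mul_nonneg hlam hs]
    · rw [add_zero]
      refine mul_le_mul_of_nonneg_right ?_ hs
      rw [div_le_iff₀ hd]; exact hΛ j hj
  refine (Finset.sum_le_sum fun j _ => h3 j).trans ?_
  rw [Finset.sum_add_distrib, ← Finset.mul_sum, PP_norm_sum hfam hτ, Finset.sum_ite_mem,
    Finset.univ_inter]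
end fam

/-- The embedding g ↦ g^I as a homomorphism. -/
def onIHom {G : Type*} [Group G] {k : ℕ} (I : Finset (Fin k)) : G →* (Fin k → G) where
  toFun g := onI g I
  map_one' := by ext i; simp [onI]
  map_mul' a b := by
    ext i
    by_cases h : i ∈ I <;> simp [onI, h]

lemma onI_mul {G : Type*} [Group G] {k : ℕ} {m : G} (hm : m * m = 1) (I K : Finset (Fin k)) :
    onI m I * onI m K = onI m (symmDiff I K) := by
  ext i
  by_cases h : i ∈ I <;> by_cases h' : i ∈ K <;> simp [onI, h, h', Finset.mem_symmDiff, hm]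

lemma onI_inv {G : Type*} [Group G] {k : ℕ} {m : G} (hm : m * m = 1) (I : Finset (Fin k)) :
    (onI m I)⁻¹ = onI m I := by
  rw [inv_eq_iff_mul_eq_one, onI_mul hm]
  ext i; simp [onI]

lemma invProj_norm {G V : Type*} [Group G] [NormedAddCommGroup V] [InnerProductSpace ℂ V] {k : ℕ}
    {ρ : Representation ℂ (Fin k → G) V} (hρ : IsUnitaryRep ρ) {m : G} (hm : m * m = 1) (v : V) :
    ((‖invProj ρ m v‖ ^ 2 : ℝ) : ℂ) =
      ((2 : ℂ) ^ k)⁻¹ * ∑ I : Finset (Fin k), ⟪v, ρ (onI m I) v⟫_ℂ := by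
  have hinv : ∀ I : Finset (Fin k), ρ (onI m I) * invProj ρ m = invProj ρ m := by
    intro I
    unfold invProj
    rw [mul_smul_comm, Finset.mul_sum]
    congr 1
    simp only [← map_mul, onI_mul hm]
    exact Equiv.sum_comp (Function.Involutive.toPerm (fun K => symmDiff I K)
      (symmDiff_symmDiff_cancel_left I)) (fun K => (ρ (onI m K) : V →ₗ[ℂ] V))
  have h1 : ((‖invProj ρ m v‖ ^ 2 : ℝ) : ℂ) = ⟪invProj ρ m v, invProj ρ m v⟫_ℂ := by
    rw [inner_self_eq_norm_sq_to_K]; simp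
  have h2 : ⟪invProj ρ m v, invProj ρ m v⟫_ℂ = ⟪v, invProj ρ m v⟫_ℂ := by
    have h3 : ∀ I : Finset (Fin k), ⟪ρ (onI m I) v, invProj ρ m v⟫_ℂ = ⟪v, invProj ρ m v⟫_ℂ := by
      intro I
      rw [unitary_adj hρ, onI_inv hm, ← Module.End.mul_apply, hinv]
    have h4 : invProj ρ m v = ((2 : ℂ) ^ k)⁻¹ • ∑ I : Finset (Fin k), ρ (onI m I) v := by
      simp [invProj, LinearMap.sum_apply]
    conv_lhs => 
      arg 2
      rw [h4]
    rw [inner_smul_left, sum_inner, Finset.sum_congr rfl fun I _ => h3 I]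
    have h5 : starRingEnd ℂ (2 : ℂ) = 2 := Complex.conj_ofNat 2
    simp [h5]
  rw [h1, h2, invProj, LinearMap.smul_apply, LinearMap.sum_apply, inner_smul_right, inner_sum]

section fin
variable {G : Type*} [Group G] [Fintype G]
    {J : Type*} [Fintype J]
    {W : J → Type*} [∀ j, NormedAddCommGroup (W j)] [∀ j, InnerProductSpace ℂ (W j)]
    [∀ j, FiniteDimensional ℂ (W j)]
    {σ : ∀ j, Representation ℂ G (W j)}

lemma point_bound (hfam : IsCompleteFamily W σ) (M : Finset G) (m₀ : G) (hm₀M : m₀ ∈ M)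
    (hM : ∀ m : G, m ∈ M ↔ IsConj m₀ m)
    (hinv : ∀ m ∈ M, m * m = 1 ∧ m ≠ 1)
    (Λ : Finset J) (lam : ℝ) (hlam : 0 ≤ lam)
    (hΛ : ∀ j ∉ Λ, ‖repChar (σ j) m₀‖ ≤ lam * (Module.finrank ℂ (W j) : ℝ))
    {k : ℕ} {V : Type*} [NormedAddCommGroup V]
    [InnerProductSpace ℂ V] {ρ : Representation ℂ (Fin k → G) V} (hρ : IsUnitaryRep ρ) (v : V)
    (hv : ‖v‖ = 1) :
    |(1 / (M.card : ℝ)) * ∑ m ∈ M, ‖invProj ρ m v‖ ^ 2 - ((2 : ℝ) ^ k)⁻¹| ≤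
      ((2 : ℝ) ^ k)⁻¹ * ∑ I ∈ Finset.univ.erase (∅ : Finset (Fin k)),
        (lam + ∑ j ∈ Λ, ‖PP σ (ρ.comp (onIHom I)) j v‖ ^ 2) := by
  have hMc : (M.card : ℂ) ≠ 0 := by
    simpa using Finset.ne_empty_of_mem hm₀M
  have key : (((1 / (M.card : ℝ)) * ∑ m ∈ M, ‖invProj ρ m v‖ ^ 2 - ((2 : ℝ) ^ k)⁻¹ : ℝ) : ℂ) =
      ((2 : ℂ) ^ k)⁻¹ * ∑ I ∈ Finset.univ.erase (∅ : Finset (Fin k)),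
        ((M.card : ℂ)⁻¹ * ∑ m ∈ M, ⟪v, (ρ.comp (onIHom I)) m v⟫_ℂ) := by
    have h0 : (M.card : ℂ)⁻¹ * ∑ m ∈ M, ⟪v, ρ (onI m (∅ : Finset (Fin k))) v⟫_ℂ = 1 := by
      have : ∀ m : G, onI m (∅ : Finset (Fin k)) = 1 := fun m => by ext; simp [onI]
      simp [this, hv, hMc, inner_self_eq_norm_sq_to_K]
    have h1 : ∑ I ∈ Finset.univ.erase (∅ : Finset (Fin k)),
        ((M.card : ℂ)⁻¹ * ∑ m ∈ M, ⟪v, (ρ.comp (onIHom I)) m v⟫_ℂ) =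
        ∑ I : Finset (Fin k), ((M.card : ℂ)⁻¹ * ∑ m ∈ M, ⟪v, ρ (onI m I) v⟫_ℂ) - 1 := by
      rw [← Finset.add_sum_erase _ _ (Finset.mem_univ (∅ : Finset (Fin k))), h0,
        add_sub_cancel_left]
      rfl
    have h2 : (((∑ m ∈ M, ‖invProj ρ m v‖ ^ 2 : ℝ)) : ℂ) =
        ((2 : ℂ) ^ k)⁻¹ * ∑ m ∈ M, ∑ I : Finset (Fin k), ⟪v, ρ (onI m I) v⟫_ℂ := by
      rw [Complex.ofReal_sum, Finset.mul_sum]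
      exact Finset.sum_congr rfl fun m hm => invProj_norm hρ (hinv m hm).1 v
    rw [h1, Complex.ofReal_sub, Complex.ofReal_mul, h2, Finset.sum_comm, ← Finset.mul_sum]
    push_cast
    ring
  rw [← Real.norm_eq_abs, ← Complex.norm_real, key, norm_mul, norm_inv, norm_pow]
  simp only [RCLike.norm_ofNat]
  refine mul_le_mul_of_nonneg_left ?_ (by positivity)
  refine (norm_sum_le _ _).trans (Finset.sum_le_sum fun I _ => ?_)
  have hu : IsUnitaryRep (ρ.comp (onIHom I) : Representation ℂ G V) := fun g => hρ _
  have := avg_bound hfam M m₀ hm₀M hM Λ lam hlam hΛ hu v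
  simpa [hv] using this

lemma trace_PP (hfam : IsCompleteFamily W σ) {k : ℕ}
    {T : Type*} [Fintype T]
    (Vi : T → Type*) [∀ i, NormedAddCommGroup (Vi i)] [∀ i, InnerProductSpace ℂ (Vi i)]
    [∀ i, FiniteDimensional ℂ (Vi i)]
    (ρi : ∀ i, Representation ℂ (Fin k → G) (Vi i)) (hfam' : IsCompleteFamily Vi ρi)
    (ι : T → Type*) [∀ i, Fintype (ι i)] (B : ∀ i, OrthonormalBasis (ι i) ℂ (Vi i))
    (I : Finset (Fin k)) (hI : I.Nonempty) (j : J) :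
    ∑ i, (Module.finrank ℂ (Vi i) : ℝ) / (Fintype.card G : ℝ) ^ k *
      ∑ x, ‖PP σ ((ρi i).comp (onIHom I)) j (B i x)‖ ^ 2 =
      (Module.finrank ℂ (W j) : ℝ) ^ 2 / (Fintype.card G : ℝ) := by
  classical
  have hc : (Fintype.card G : ℂ) ≠ 0 := by simp
  have h1 : ∀ i, (((∑ x, ‖PP σ ((ρi i).comp (onIHom I)) j (B i x)‖ ^ 2 : ℝ)) : ℂ) =
      (Module.finrank ℂ (W j) : ℂ) / (Fintype.card G : ℂ) *
        ∑ g, starRingEnd ℂ (repChar (σ j) g) * repChar (ρi i) (onI g I) := by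
    intro i
    have hu : IsUnitaryRep ((ρi i).comp (onIHom I) : Representation ℂ G (Vi i)) :=
      fun g => hfam'.1 i _
    rw [Complex.ofReal_sum]
    simp only [← PP_inner hfam hu]
    rw [← LinearMap.trace_eq_sum_inner]
    simp only [PP, isoProj, map_smul, map_sum, smul_eq_mul]
    rfl
  have h2 : ((∑ i, (Module.finrank ℂ (Vi i) : ℝ) / (Fintype.card G : ℝ) ^ k *
      ∑ x, ‖PP σ ((ρi i).comp (onIHom I)) j (B i x)‖ ^ 2 : ℝ) : ℂ) =
      (((Module.finrank ℂ (W j) : ℝ) ^ 2 / (Fintype.card G : ℝ) : ℝ) : ℂ) := by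
    rw [Complex.ofReal_sum]
    simp only [Complex.ofReal_mul, h1]
    push_cast
    have h3 : ∑ g, starRingEnd ℂ (repChar (σ j) g) *
        ∑ i, (Module.finrank ℂ (Vi i) : ℂ) * repChar (ρi i) (onI g I) =
        (Module.finrank ℂ (W j) : ℂ) * (Fintype.card G : ℂ) ^ k := by
      simp only [fam_reg hfam']
      have : ∀ g : G, onI g I = 1 ↔ g = 1 := by
        intro g
        constructor
        · intro h
          obtain ⟨i, hi⟩ := hI
          simpa [onI, hi] using congrFun h i
        · rintro rfl
          ext i; simp [onI]
      simp [this, repChar_one']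
    calc _ = (Module.finrank ℂ (W j) : ℂ) / (Fintype.card G : ℂ) / (Fintype.card G : ℂ) ^ k *
        ∑ g, starRingEnd ℂ (repChar (σ j) g) *
        ∑ i, (Module.finrank ℂ (Vi i) : ℂ) * repChar (ρi i) (onI g I) := by
          simp only [Finset.mul_sum]
          rw [Finset.sum_comm]
          refine Finset.sum_congr rfl fun g _ => Finset.sum_congr rfl fun i _ => ?_
          ring
      _ = _ := by
        rw [h3]; field_simp
  exact_mod_cast h2

lemma planch {k : ℕ}
    {T : Type*} [Fintype T]
    (Vi : T → Type*) [∀ i, NormedAddCommGroup (Vi i)] [∀ i, InnerProductSpace ℂ (Vi i)]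
    [∀ i, FiniteDimensional ℂ (Vi i)]
    (ρi : ∀ i, Representation ℂ (Fin k → G) (Vi i)) (hfam' : IsCompleteFamily Vi ρi) :
    ∑ i, (Module.finrank ℂ (Vi i) : ℝ) / (Fintype.card G : ℝ) ^ k *
      (Module.finrank ℂ (Vi i) : ℝ) = 1 := by
  classical
  have hc : (Fintype.card G : ℝ) ≠ 0 := by simp
  have := fam_reg hfam' 1
  simp only [repChar_one', if_true] at this
  have h2 : ∑ i, (Module.finrank ℂ (Vi i) : ℝ) * (Module.finrank ℂ (Vi i) : ℝ) =
      (Fintype.card G : ℝ) ^ k := by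
    have h : (Fintype.card (Fin k → G) : ℂ) = (Fintype.card G : ℂ) ^ k := by simp
    rw [h] at this
    exact_mod_cast this
  calc _ = (∑ i, (Module.finrank ℂ (Vi i) : ℝ) * (Module.finrank ℂ (Vi i) : ℝ)) /
      (Fintype.card G : ℝ) ^ k := by
        rw [Finset.sum_div]
        exact Finset.sum_congr rfl fun i _ => by ring
    _ = 1 := by rw [h2]; field_simp
end fin

/-- Expectation bound (Lemma 6 of the paper): the Plancherel- and basis-average
of `|E_m ‖Π_m^{(i)} b‖² − 2^{-k}|` is at most `λ + P(Λ)`. -/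
theorem stmt12 {G : Type*} [Group G] [Fintype G]
    {J : Type*} [Fintype J]
    (W : J → Type*) [∀ j, NormedAddCommGroup (W j)] [∀ j, InnerProductSpace ℂ (W j)]
    [∀ j, FiniteDimensional ℂ (W j)]
    (σ : ∀ j, Representation ℂ G (W j)) (hfam : IsCompleteFamily W σ)
    (M : Finset G) (m₀ : G) (hm₀M : m₀ ∈ M)
    (hM : ∀ m : G, m ∈ M ↔ IsConj m₀ m)
    (hinv : ∀ m ∈ M, m * m = 1 ∧ m ≠ 1)
    {k : ℕ} (hk : 1 ≤ k)
    {T : Type*} [Fintype T]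
    (Vi : T → Type*) [∀ i, NormedAddCommGroup (Vi i)] [∀ i, InnerProductSpace ℂ (Vi i)]
    [∀ i, FiniteDimensional ℂ (Vi i)]
    (ρi : ∀ i, Representation ℂ (Fin k → G) (Vi i)) (hfam' : IsCompleteFamily Vi ρi)
    (ι : T → Type*) [∀ i, Fintype (ι i)] (B : ∀ i, OrthonormalBasis (ι i) ℂ (Vi i))
    (Λ : Finset J) (lam : ℝ) (hlam : 0 ≤ lam)
    (hΛ : ∀ j ∉ Λ, ‖repChar (σ j) m₀‖ ≤ lam * (Module.finrank ℂ (W j) : ℝ)) :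
    ∑ i, (Module.finrank ℂ (Vi i) : ℝ) ^ 2 / (Fintype.card G : ℝ) ^ k *
        ((1 / (Module.finrank ℂ (Vi i) : ℝ)) *
          ∑ x : ι i,
            |(1 / (M.card : ℝ)) * ∑ m ∈ M, ‖invProj (ρi i) m (B i x)‖ ^ 2
              - ((2 : ℝ) ^ k)⁻¹|)
      ≤ lam + ∑ j ∈ Λ, (Module.finrank ℂ (W j) : ℝ) ^ 2 / (Fintype.card G : ℝ) := by

  set P : ℝ := ∑ j ∈ Λ, (Module.finrank ℂ (W j) : ℝ) ^ 2 / (Fintype.card G : ℝ) with hP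
  have hP0 : 0 ≤ P := Finset.sum_nonneg fun j _ => by positivity
  have step : ∀ i, (Module.finrank ℂ (Vi i) : ℝ) ^ 2 / (Fintype.card G : ℝ) ^ k *
        ((1 / (Module.finrank ℂ (Vi i) : ℝ)) *
          ∑ x : ι i,
            |(1 / (M.card : ℝ)) * ∑ m ∈ M, ‖invProj (ρi i) m (B i x)‖ ^ 2
              - ((2 : ℝ) ^ k)⁻¹|) ≤
      ((2 : ℝ) ^ k)⁻¹ * ∑ I ∈ Finset.univ.erase (∅ : Finset (Fin k)),
        (lam * ((Module.finrank ℂ (Vi i) : ℝ) / (Fintype.card G : ℝ) ^ k *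
          (Module.finrank ℂ (Vi i) : ℝ)) +
        ∑ j ∈ Λ, (Module.finrank ℂ (Vi i) : ℝ) / (Fintype.card G : ℝ) ^ k *
          ∑ x, ‖PP σ ((ρi i).comp (onIHom I)) j (B i x)‖ ^ 2) := by
    intro i
    have hd : (Module.finrank ℂ (Vi i) : ℝ) ≠ 0 := by
      have := finrank_ne (hfam'.2.1 i)
      exact_mod_cast this
    have hcard : (Fintype.card (ι i) : ℝ) = Module.finrank ℂ (Vi i) := by
      rw [Module.finrank_eq_card_basis (B i).toBasis]
    have e1 : ∀ S : ℝ, (Module.finrank ℂ (Vi i) : ℝ) ^ 2 / (Fintype.card G : ℝ) ^ k *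
        ((1 / (Module.finrank ℂ (Vi i) : ℝ)) * S) =
        (Module.finrank ℂ (Vi i) : ℝ) / (Fintype.card G : ℝ) ^ k * S := by
      intro S; field_simp
    rw [e1]
    have e2 := Finset.sum_le_sum fun (x : ι i) (_ : x ∈ Finset.univ) =>
      point_bound hfam M m₀ hm₀M hM hinv Λ lam hlam hΛ (hfam'.1 i) (B i x) (by simp)
    refine (mul_le_mul_of_nonneg_left e2 (by positivity)).trans (le_of_eq ?_)
    rw [← Finset.mul_sum, Finset.sum_comm, mul_left_comm]
    congr 1
    rw [Finset.mul_sum]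
    refine Finset.sum_congr rfl fun I _ => ?_
    rw [Finset.sum_add_distrib, mul_add]
    congr 1
    · simp [hcard]
      ring
    · rw [Finset.sum_comm, Finset.mul_sum]
  refine (Finset.sum_le_sum fun i _ => step i).trans ?_
  rw [← Finset.mul_sum, Finset.sum_comm]
  have e3 : ∀ I ∈ Finset.univ.erase (∅ : Finset (Fin k)),
      ∑ i, (lam * ((Module.finrank ℂ (Vi i) : ℝ) / (Fintype.card G : ℝ) ^ k *
          (Module.finrank ℂ (Vi i) : ℝ)) +
        ∑ j ∈ Λ, (Module.finrank ℂ (Vi i) : ℝ) / (Fintype.card G : ℝ) ^ k *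
          ∑ x, ‖PP σ ((ρi i).comp (onIHom I)) j (B i x)‖ ^ 2) = lam + P := by
    intro I hI
    have hI' : I.Nonempty := Finset.nonempty_iff_ne_empty.2 (Finset.ne_of_mem_erase hI)
    rw [Finset.sum_add_distrib, ← Finset.mul_sum, planch Vi ρi hfam', Finset.sum_comm, mul_one]
    congr 1
    exact Finset.sum_congr rfl fun j _ => trace_PP hfam Vi ρi hfam' ι B I hI' j
  rw [Finset.sum_congr rfl e3, Finset.sum_const, nsmul_eq_mul]
  have e4 : ((Finset.univ.erase (∅ : Finset (Fin k))).card : ℝ) ≤ 2 ^ k := by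
    have : (Finset.univ.erase (∅ : Finset (Fin k))).card ≤ 2 ^ k :=
      (Finset.card_erase_le).trans (by simp)
    exact_mod_cast this
  rw [← mul_assoc]
  refine mul_le_of_le_one_left (by positivity) ?_
  rw [inv_mul_le_one₀ (by positivity)]
  exact e4
end
end

section
/- Let G be a finite group, let (σ_j)_{j∈J} be a complete family of irreducibles for G, let M ⊆ G be a conjugacy class of involutions with representative m₀, let k ≥ 1, let (ρ_i)_{i∈T} be a complete family of irreducibles for G^k acting on spaces V_i of dimensions d_i, and for each i let B_i be an orthonormal basis of V_i. Let Λ ⊆ J, P(Λ) = Σ_{j∈Λ} d_j²/|G|, and let λ be a real number with 0 ≤ λ ≤ 1 and |χ_j(m₀)| ≤ λ·d_j for every j ∈ J \ Λ. For m ∈ M, i ∈ T, b ∈ B_i, set H_m(i,b) = ‖Π_m^{(i)} b‖² / rank(Π_m^{(i)}), with the convention x/0 = 0. Then Σ_{i∈T} (d_i²/|G|^k) Σ_{b∈B_i} | 1/d_i − (1/|M|) Σ_{m∈M} H_m(i,b) | ≤ 2 · 2^k · (λ + P(Λ)). -/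
noncomputable section

open scoped BigOperators InnerProductSpace

namespace S13

set_option linter.unusedSectionVars false

open Module

lemma isIrr {G V : Type*} [Group G] [AddCommGroup V] [Module ℂ V]
    {ρ : Representation ℂ G V} (h : IsIrreducibleRep ρ) : ρ.IsIrreducible := by
  obtain ⟨⟨v, hv⟩, h2⟩ := h
  have : Nontrivial (Subrepresentation ρ) := by
    refine ⟨⊥, ⊤, fun hh => hv ?_⟩
    have h3 : v ∈ (⊤ : Subrepresentation ρ).toSubmodule := by
      change v ∈ (⊤ : Submodule ℂ V); trivial
    rw [← hh] at h3
    exact (Submodule.mem_bot ℂ).1 h3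
  refine @IsSimpleOrder.mk _ _ _ this ?_
  intro a
  rcases h2 a.toSubmodule (fun g v hv => a.apply_mem_toSubmodule g hv) with h | h
  · left; exact Subrepresentation.toSubmodule_injective h
  · right; exact Subrepresentation.toSubmodule_injective h

lemma finrank_pos' {G V : Type*} [Group G] [AddCommGroup V] [Module ℂ V] [FiniteDimensional ℂ V]
    {ρ : Representation ℂ G V} (h : IsIrreducibleRep ρ) : 0 < finrank ℂ V := by
  obtain ⟨⟨v, hv⟩, h2⟩ := h
  exact Module.finrank_pos_iff_exists_ne_zero.2 ⟨v, hv⟩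

lemma schur {G V : Type*} [Group G] [AddCommGroup V] [Module ℂ V] [FiniteDimensional ℂ V]
    {ρ : Representation ℂ G V} (h : IsIrreducibleRep ρ) (f : V →ₗ[ℂ] V)
    (hf : ∀ g, f * ρ g = ρ g * f) :
    f = (LinearMap.trace ℂ V f / (finrank ℂ V : ℂ)) • 1 := by
  have hd := finrank_pos' h
  have : Nontrivial V := Module.finrank_pos_iff.1 hd
  obtain ⟨c, hc⟩ := Module.End.exists_eigenvalue f
  have hfc : f = c • 1 := by
    rcases h.2 (End.eigenspace f c) (fun g v hv => by
      rw [End.mem_eigenspace_iff] at hv ⊢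
      have := LinearMap.congr_fun (hf g) v
      simp only [Module.End.mul_apply] at this
      rw [this, hv, map_smul]) with h1 | h1
    · exact absurd h1 hc
    · ext v
      have : v ∈ End.eigenspace f c := by rw [h1]; trivial
      rw [End.mem_eigenspace_iff] at this
      simpa using this
  rw [hfc]
  congr 1
  rw [map_smul, LinearMap.trace_one]
  have : (finrank ℂ V : ℂ) ≠ 0 := by exact_mod_cast hd.ne'
  simp [this]

lemma char_conj' {G V : Type*} [Group G] [AddCommGroup V] [Module ℂ V]
    (ρ : Representation ℂ G V) (g h : G) : repChar ρ (h * g * h⁻¹) = repChar ρ g :=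
  Representation.char_conj ρ g h

lemma schur_class {G V : Type*} [Group G] [Fintype G] [AddCommGroup V] [Module ℂ V]
    [FiniteDimensional ℂ V]
    {ρ : Representation ℂ G V} (h : IsIrreducibleRep ρ) (a : G → ℂ)
    (ha : ∀ g h, a (h * g * h⁻¹) = a g) :
    ∑ g, a g • ρ g = ((∑ g, a g * repChar ρ g) / (finrank ℂ V : ℂ)) • (1 : V →ₗ[ℂ] V) := by
  have key := schur h (∑ g, a g • ρ g) (fun x => by
    rw [Finset.sum_mul, Finset.mul_sum]
    rw [← Equiv.sum_comp (MulAut.conj x).toEquiv]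
    refine Finset.sum_congr rfl fun g _ => ?_
    simp only [MulEquiv.toEquiv_eq_coe, EquivLike.coe_coe, MulAut.conj_apply, ha, smul_mul_assoc,
      mul_smul_comm]
    rw [← map_mul, ← map_mul]
    simp)
  rw [key]
  simp [map_sum, repChar]

section unit
variable {G V : Type*} [Group G] [NormedAddCommGroup V] [InnerProductSpace ℂ V]

lemma unit_adj {ρ : Representation ℂ G V} (h : IsUnitaryRep ρ) (g : G) (v w : V) :
    ⟪ρ g v, w⟫_ℂ = ⟪v, ρ g⁻¹ w⟫_ℂ := by
  have := h g v (ρ g⁻¹ w)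
  rw [← this, ← Module.End.mul_apply, ← map_mul]
  simp

lemma unit_norm {ρ : Representation ℂ G V} (h : IsUnitaryRep ρ) (g : G) (v : V) :
    ‖ρ g v‖ = ‖v‖ := by
  have := h g v v
  rw [inner_self_eq_norm_sq_to_K, inner_self_eq_norm_sq_to_K] at this
  have h2 : ‖ρ g v‖ ^ 2 = ‖v‖ ^ 2 := by exact_mod_cast this
  exact (sq_eq_sq₀ (norm_nonneg _) (norm_nonneg _)).1 h2

variable [FiniteDimensional ℂ V]

lemma char_inv {ρ : Representation ℂ G V} (h : IsUnitaryRep ρ) (g : G) :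
    repChar ρ g⁻¹ = starRingEnd ℂ (repChar ρ g) := by
  unfold repChar
  rw [LinearMap.trace_eq_sum_inner _ (stdOrthonormalBasis ℂ V),
    LinearMap.trace_eq_sum_inner _ (stdOrthonormalBasis ℂ V), map_sum]
  refine Finset.sum_congr rfl fun i _ => ?_
  rw [← unit_adj h, inner_conj_symm]

lemma char_norm {ρ : Representation ℂ G V} (h : IsUnitaryRep ρ) (g : G) :
    ‖repChar ρ g‖ ≤ finrank ℂ V := by
  unfold repChar
  rw [LinearMap.trace_eq_sum_inner _ (stdOrthonormalBasis ℂ V)]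
  refine (norm_sum_le _ _).trans ?_
  calc _ ≤ ∑ i : Fin (finrank ℂ V), (1 : ℝ) := by
        refine Finset.sum_le_sum fun i _ => ?_
        refine (norm_inner_le_norm _ _).trans ?_
        rw [unit_norm h]; simp
    _ = _ := by simp
end unit

section fam
variable {G : Type*} [Group G] {J : Type*}
    {W : J → Type*} [∀ j, NormedAddCommGroup (W j)] [∀ j, InnerProductSpace ℂ (W j)]
    [∀ j, FiniteDimensional ℂ (W j)]
    {σ : ∀ j, Representation ℂ G (W j)}

lemma exists_iso (hfam : IsCompleteFamily W σ) {V : Type*} [AddCommGroup V] [Module ℂ V]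
    [FiniteDimensional ℂ V] {τ : Representation ℂ G V} (h : IsIrreducibleRep τ) :
    ∃ j, RepIso τ (σ j) := by
  let e : V ≃ₗ[ℂ] (Fin (finrank ℂ V) → ℂ) := (finBasis ℂ V).equivFun
  let τ' : Representation ℂ G (Fin (finrank ℂ V) → ℂ) :=
    { toFun := fun g => e.conj (τ g)
      map_one' := by ext; simp [LinearEquiv.conj_apply]
      map_mul' := fun g h => by
        ext; simp [LinearEquiv.conj_apply] }
  have hτ' : ∀ g v, τ' g (e v) = e (τ g v) := fun g v => by
    simp [τ', LinearEquiv.conj_apply]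
  have hirr : IsIrreducibleRep τ' := by
    obtain ⟨⟨v, hv⟩, h2⟩ := h
    refine ⟨⟨e v, by simpa using hv⟩, fun U hU => ?_⟩
    rcases h2 (U.comap e.toLinearMap) (fun g v hv => by
      have := hU g _ hv
      change e (τ g v) ∈ U
      rw [← hτ']; exact this) with h3 | h3
    · left
      rw [Submodule.eq_bot_iff] at h3 ⊢
      intro x hx
      have := h3 (e.symm x) (by simpa using hx)
      simpa using this
    · right
      rw [Submodule.eq_top_iff'] at h3 ⊢
      intro x
      simpa using h3 (e.symm x)
  obtain ⟨j, E, hE⟩ := hfam.2.2.2 _ τ' hirr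
  exact ⟨j, e.trans E, fun g v => by simp [← hE, hτ']⟩

lemma kill_aux [Fintype G] (hfam : IsCompleteFamily W σ) {V : Type*} [NormedAddCommGroup V]
    [InnerProductSpace ℂ V]
    [FiniteDimensional ℂ V] {τ : Representation ℂ G V} (hτ : IsUnitaryRep τ)
    (a : G → ℂ) (ha : ∀ j, ∑ g, a g • σ j g = 0) (n : ℕ) :
    ∀ S : Submodule ℂ V, finrank ℂ S = n → (∀ g v, v ∈ S → τ g v ∈ S) →
      ∀ v ∈ S, ∑ g, a g • τ g v = 0 := by
  induction n using Nat.strong_induction_on with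
  | _ n ih =>
  intro S hn hS v hv
  let τS : Representation ℂ G S := Subrepresentation.toRepresentation ⟨S, fun g v hv => hS g v hv⟩
  have hτS : ∀ g (v : S), ((τS g v : S) : V) = τ g v := fun g v => rfl
  by_cases hv0 : v = 0
  · simp [hv0]
  by_cases hirr : IsIrreducibleRep τS
  · obtain ⟨j, E, hE⟩ := exists_iso hfam hirr
    have h1 : E (∑ g, a g • τS g ⟨v, hv⟩) = 0 := by
      rw [map_sum]
      have := LinearMap.congr_fun (ha j) (E ⟨v, hv⟩)
      simpa [hE] using this
    have h2 : ∑ g, a g • τS g ⟨v, hv⟩ = 0   := E.map_eq_zero_iff.1 h1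
    have h3 := congrArg (Subtype.val) h2
    simpa [hτS] using h3
  · have : ¬ ∀ U : Submodule ℂ S, (∀ (g : G) (v : S), v ∈ U → τS g v ∈ U) → U = ⊥ ∨ U = ⊤ :=
      fun h => hirr ⟨⟨⟨v, hv⟩, by simpa using hv0⟩, h⟩
    push Not at this
    obtain ⟨U, hU, hUb, hUt⟩ := this
    have hUo : ∀ (g : G) (v : S), v ∈ Uᗮ → τS g v ∈ Uᗮ := by
      intro g v hv
      rw [Submodule.mem_orthogonal] at hv ⊢
      intro u hu
      have h1 := hv _ (hU g⁻¹ u hu)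
      change ⟪(u : V), τ g v⟫_ℂ = 0
      have h2 : ⟪τ g⁻¹ u, (v : V)⟫_ℂ = 0 := h1
      rwa [unit_adj hτ, inv_inv] at h2
    have hsum := Submodule.finrank_add_finrank_orthogonal U
    have hUpos : 0 < finrank ℂ U := Nat.pos_of_ne_zero (fun h => hUb (Submodule.finrank_eq_zero.1 h))
    have hUlt : finrank ℂ U < finrank ℂ S := Submodule.finrank_lt (lt_top_iff_ne_top.2 hUt).ne
    have key : ∀ U' : Submodule ℂ S, (∀ (g : G) (v : S), v ∈ U' → τS g v ∈ U') →
        finrank ℂ U' < n → ∀ u ∈ U', ∑ g, a g • τ g (u : V) = 0 := by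
      intro U' hU' hlt u hu
      refine ih _ hlt (U'.map S.subtype) ?_ ?_ u ⟨u, hu, rfl⟩
      · exact (Submodule.equivMapOfInjective S.subtype S.injective_subtype U').finrank_eq.symm
      · rintro g _ ⟨w, hw, rfl⟩
        exact ⟨τS g w, hU' g w hw, rfl⟩
    obtain ⟨y, hy, z, hz, hyz⟩ := Submodule.exists_add_mem_mem_orthogonal (K := U) (⟨v, hv⟩ : S)
    have hv' : v = (y : V) + z := by
      have := congrArg Subtype.val hyz
      simpa using this
    rw [hv']
    simp only [map_add, smul_add, Finset.sum_add_distrib]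
    rw [key U hU (by omega) y hy, key Uᗮ hUo (by omega) z hz, add_zero]

lemma alg_eq {G V : Type*} [Group G] [Fintype G] [AddCommGroup V] [Module ℂ V]
    (ρ : Representation ℂ G V) (x : MonoidAlgebra ℂ G) :
    ρ.asAlgebraHom x = ∑ g, x.coeff g • ρ g := by
  rw [Representation.asAlgebraHom_def, MonoidAlgebra.lift_apply, Finsupp.sum_fintype]
  simp

lemma kill [Fintype G] (hfam : IsCompleteFamily W σ) {V : Type*} [NormedAddCommGroup V]
    [InnerProductSpace ℂ V]
    [FiniteDimensional ℂ V] {τ : Representation ℂ G V} (hτ : IsUnitaryRep τ)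
    (x : MonoidAlgebra ℂ G) (hx : ∀ j, (σ j).asAlgebraHom x = 0) :
    τ.asAlgebraHom x = 0 := by
  rw [alg_eq]
  ext v
  have := kill_aux hfam hτ (fun g => x.coeff g) (fun j => by rw [← alg_eq, hx j]) _ ⊤ rfl
    (fun _ _ _ => trivial) v trivial
  simpa using this

def el {G : Type*} [Group G] [Fintype G] (a : G → ℂ) : MonoidAlgebra ℂ G :=
  ∑ g, MonoidAlgebra.single g (a g)

lemma alg_el {G V : Type*} [Group G] [Fintype G] [AddCommGroup V] [Module ℂ V]
    (ρ : Representation ℂ G V) (a : G → ℂ) :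
    ρ.asAlgebraHom (el a) = ∑ g, a g • ρ g := by
  simp [el, map_sum]

def pj {G V : Type*} [Group G] [Fintype G] [AddCommGroup V] [Module ℂ V]
    (ρ : Representation ℂ G V) : MonoidAlgebra ℂ G :=
  el (fun g => (finrank ℂ V : ℂ) / (Fintype.card G : ℂ) * starRingEnd ℂ (repChar ρ g))

lemma orth [Fintype G] [DecidableEq J] (hfam : IsCompleteFamily W σ) (j l : J) :
    (σ l).asAlgebraHom (pj (σ j)) = if j = l then 1 else 0 := by
  have := isIrr (hfam.2.1 j)
  have := isIrr (hfam.2.1 l)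
  have hc : (Fintype.card G : ℂ) ≠ 0 := by exact_mod_cast Fintype.card_ne_zero
  have hd : (finrank ℂ (W l) : ℂ) ≠ 0 := by exact_mod_cast (finrank_pos' (hfam.2.1 l)).ne'
  have : Invertible (Nat.card G : ℂ) := invertibleOfNonzero (by rwa [Nat.card_eq_fintype_card])
  have h := Representation.char_orthonormal (σ l) (σ j)
  have h' : ∑ g : G, repChar (σ l) g * repChar (σ j) g⁻¹ =
     (Fintype.card G : ℂ) * if j = l then 1 else 0 := by
    have e : Nonempty (Representation.Equiv (σ j) (σ l)) ↔ j = l := by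
      constructor
      · rintro ⟨φ⟩
        by_contra hne
        refine hfam.2.2.1 j l hne ⟨φ.toLinearEquiv, fun g v => ?_⟩
        exact φ.toIntertwiningMap.isIntertwining _ _ g v
      · rintro rfl
        exact ⟨Representation.Equiv.refl _⟩
    simp only [e] at h
    rw [Nat.card_eq_fintype_card] at h
    have h2 : (Fintype.card G : ℂ)⁻¹ * ∑ g : G, repChar (σ l) g * repChar (σ j) g⁻¹ =
       if j = l then 1 else 0 := by
      rw [← h]; rfl
    rw [← h2]; field_simp
  rw [pj, alg_el, schur_class (hfam.2.1 l)]
  · have : ∑ g : G, (finrank ℂ (W j) : ℂ) / (Fintype.card G : ℂ) *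
        starRingEnd ℂ (repChar (σ j) g) * repChar (σ l) g =
        (finrank ℂ (W j) : ℂ) / (Fintype.card G : ℂ) *
          ∑ g : G, repChar (σ l) g * repChar (σ j) g⁻¹ := by
      rw [Finset.mul_sum]
      refine Finset.sum_congr rfl fun g _ => ?_
      rw [char_inv (hfam.1 j)]; ring
    rw [this, h']
    split_ifs with hjl
    · subst hjl
      have : (finrank ℂ (W j) : ℂ) / (Fintype.card G : ℂ) * ((Fintype.card G : ℂ) * 1) /
        (finrank ℂ (W j) : ℂ) = 1 := by field_simp
      rw [this, one_smul]
    · simp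
  · intro g h
    simp [char_conj']

section unitaryV
variable [Fintype G] [Fintype J] {V : Type*} [NormedAddCommGroup V]
    [InnerProductSpace ℂ V]
    [FiniteDimensional ℂ V] {τ : Representation ℂ G V}

lemma sum_pj (hfam : IsCompleteFamily W σ) (hτ : IsUnitaryRep τ) :
    ∑ j, τ.asAlgebraHom (pj (σ j)) = 1 := by
  classical
  have := kill hfam hτ (∑ j, pj (σ j) - 1) (fun l => by
    rw [map_sub, map_sum, map_one]
    simp [orth hfam])
  rw [map_sub, map_sum, map_one] at this
  exact sub_eq_zero.1 this

lemma pj_idem (hfam : IsCompleteFamily W σ) (hτ : IsUnitaryRep τ) (j : J) :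
    τ.asAlgebraHom (pj (σ j)) * τ.asAlgebraHom (pj (σ j)) = τ.asAlgebraHom (pj (σ j)) := by
  classical
  have := kill hfam hτ (pj (σ j) * pj (σ j) - pj (σ j)) (fun l => by
    rw [map_sub, map_mul]
    by_cases h : j = l <;> simp [orth hfam, h])
  rw [map_sub, map_mul] at this
  exact sub_eq_zero.1 this

lemma pj_adj (hfam : IsCompleteFamily W σ) (hτ : IsUnitaryRep τ) (j : J) (v w : V) :
    ⟪τ.asAlgebraHom (pj (σ j)) v, w⟫_ℂ = ⟪v, τ.asAlgebraHom (pj (σ j)) w⟫_ℂ := by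
  rw [pj, alg_el]
  simp only [LinearMap.sum_apply, LinearMap.smul_apply, sum_inner, inner_sum, inner_smul_left,
    inner_smul_right]
  rw [← Equiv.sum_comp (Equiv.inv G)]
  refine Finset.sum_congr rfl fun g _ => ?_
  simp only [Equiv.inv_apply]
  rw [unit_adj hτ, inv_inv, char_inv (hfam.1 j)]
  simp

lemma pj_inner (hfam : IsCompleteFamily W σ) (hτ : IsUnitaryRep τ) (j : J) (v : V) :
    ⟪v, τ.asAlgebraHom (pj (σ j)) v⟫_ℂ = ((‖τ.asAlgebraHom (pj (σ j)) v‖ ^ 2 : ℝ) : ℂ) := by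
  conv_lhs => rw [← pj_idem hfam hτ j, Module.End.mul_apply, ← pj_adj hfam hτ]
  rw [inner_self_eq_norm_sq_to_K]; simp

lemma sum_pj_inner (hfam : IsCompleteFamily W σ) (hτ : IsUnitaryRep τ) (v : V) :
    ∑ j, ‖τ.asAlgebraHom (pj (σ j)) v‖ ^ 2 = ‖v‖ ^ 2 := by
  have h := congrArg (fun f : V →ₗ[ℂ] V => ⟪v, f v⟫_ℂ) (sum_pj hfam hτ)
  simp only [LinearMap.sum_apply, inner_sum, pj_inner hfam hτ, Module.End.one_apply,
    inner_self_eq_norm_sq_to_K] at h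
  apply Complex.ofReal_injective
  push_cast at h ⊢
  exact h

lemma class_avg (hfam : IsCompleteFamily W σ) (hτ : IsUnitaryRep τ)
    (M : Finset G) (m₀ : G) (hm₀M : m₀ ∈ M)
    (hM : ∀ m : G, m ∈ M ↔ IsConj m₀ m) :
    (1 / (M.card : ℂ)) • ∑ m ∈ M, τ m =
      ∑ j, (repChar (σ j) m₀ / (finrank ℂ (W j) : ℂ)) • τ.asAlgebraHom (pj (σ j)) := by
  classical
  let a : G → ℂ := fun g => if g ∈ M then 1 / (M.card : ℂ) else 0
  have hMc : (M.card : ℂ) ≠ 0 := by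
    exact_mod_cast Finset.card_ne_zero_of_mem hm₀M
  have hac : ∀ g h, a (h * g * h⁻¹) = a g := by
    intro g h
    have : h * g * h⁻¹ ∈ M ↔ g ∈ M := by
      rw [hM, hM]
      have hc : IsConj g (h * g * h⁻¹) := isConj_iff.2 ⟨h, rfl⟩
      exact ⟨fun h => h.trans hc.symm, fun h => h.trans hc⟩
    simp [a, this]
  have := kill hfam hτ (el a - ∑ j, (repChar (σ j) m₀ / (finrank ℂ (W j) : ℂ)) • pj (σ j))
    (fun l => by
      rw [map_sub, map_sum, alg_el, schur_class (hfam.2.1 l) a hac]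
      have : ∑ g, a g * repChar (σ l) g = repChar (σ l) m₀ := by
        have h1 : ∀ m ∈ M, repChar (σ l) m = repChar (σ l) m₀ := by
          intro m hm
          obtain ⟨c, hc⟩ := isConj_iff.1 ((hM m).1 hm)
          rw [← hc, char_conj']
        simp only [a, ite_mul, zero_mul, Finset.sum_ite_mem, Finset.univ_inter]
        rw [Finset.sum_congr rfl fun m hm => by rw [h1 m hm]]
        rw [Finset.sum_const, nsmul_eq_mul]; field_simp
      rw [this]
      simp [orth hfam])
  rw [map_sub, map_sum, alg_el, sub_eq_zero] at this
  simp only [map_smul] at this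
  rw [← this, Finset.smul_sum]
  simp [a, ite_smul, Finset.sum_ite_mem]

lemma key_bound (hfam : IsCompleteFamily W σ) (hτ : IsUnitaryRep τ)
    (M : Finset G) (m₀ : G) (hm₀M : m₀ ∈ M)
    (hM : ∀ m : G, m ∈ M ↔ IsConj m₀ m)
    (Λ : Finset J) (lam : ℝ) (hlam0 : 0 ≤ lam)
    (hΛ : ∀ j ∉ Λ, ‖repChar (σ j) m₀‖ ≤ lam * (Module.finrank ℂ (W j) : ℝ)) (v : V) :
    ‖⟪v, ((1 / (M.card : ℂ)) • ∑ m ∈ M, τ m) v⟫_ℂ‖ ≤ lam * ‖v‖ ^ 2 +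
      ∑ j ∈ Λ, (⟪v, τ.asAlgebraHom (pj (σ j)) v⟫_ℂ).re := by
  classical
  rw [class_avg hfam hτ M m₀ hm₀M hM]
  simp only [LinearMap.sum_apply, LinearMap.smul_apply, inner_sum, inner_smul_right,
    pj_inner hfam hτ, Complex.ofReal_re]
  refine (norm_sum_le _ _).trans ?_
  rw [← sum_pj_inner hfam hτ v, Finset.mul_sum, ← Finset.sum_ite_mem_eq Λ, ← Finset.sum_add_distrib]
  refine Finset.sum_le_sum fun j _ => ?_
  have hd : (0 : ℝ) < finrank ℂ (W j) := by exact_mod_cast finrank_pos' (hfam.2.1 j)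
  rw [norm_mul, norm_div, Complex.norm_real, Complex.norm_natCast,
    Real.norm_of_nonneg (by positivity)]
  have hn : 0 ≤ ‖τ.asAlgebraHom (pj (σ j)) v‖ ^ 2 := by positivity
  split_ifs with hj
  · have : ‖repChar (σ j) m₀‖ / finrank ℂ (W j) ≤ 1 := by
      rw [div_le_one hd]; exact char_norm (hfam.1 j) _
    nlinarith [mul_le_mul_of_nonneg_right this hn, mul_nonneg hlam0 hn]
  · have : ‖repChar (σ j) m₀‖ / finrank ℂ (W j) ≤ lam := by
      rw [div_le_iff₀ hd]; exact hΛ j hj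
    nlinarith [mul_le_mul_of_nonneg_right this hn]

end unitaryV

def reg (G : Type*) [Group G] [Fintype G] : Representation ℂ G (EuclideanSpace ℂ G) where
  toFun g :=
    { toFun := fun f => WithLp.toLp 2 (fun x => f (g⁻¹ * x))
      map_add' := fun f f' => by ext; simp
      map_smul' := fun c f => by ext; simp }
  map_one' := by ext; simp
  map_mul' g h := by ext; simp [mul_assoc]

lemma reg_unitary [Fintype G] : IsUnitaryRep (reg G) := by
  intro g v w
  simp only [reg, PiLp.inner_apply]
  exact Equiv.sum_comp (Equiv.mulLeft g⁻¹) (fun x => ⟪v x, w x⟫_ℂ)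

lemma plancherel [Fintype G] [Fintype J] (hfam : IsCompleteFamily W σ) [DecidableEq G] (x : G) :
    ∑ j, (finrank ℂ (W j) : ℂ) / (Fintype.card G : ℂ) * repChar (σ j) x = if x = 1 then 1 else 0 := by
  have h := congrArg (fun f : EuclideanSpace ℂ G →ₗ[ℂ] EuclideanSpace ℂ G =>
    (f (EuclideanSpace.single 1 1)) x⁻¹) (sum_pj hfam (reg_unitary (G := G)))
  simp only [pj, alg_el] at h
  have e : ∀ g, (reg G g) (EuclideanSpace.single (1 : G) (1 : ℂ)) x⁻¹ =
      if g = x⁻¹ then 1 else 0 := by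
    intro g
    simp only [reg]
    simp [inv_mul_eq_one]
  simp [e, Module.End.one_apply] at h
  rw [Finset.sum_congr rfl fun j _ => by rw [char_inv (hfam.1 j), Complex.conj_conj]] at h
  rw [h]

end fam
end S13

namespace S13

open Module

lemma l1 {ι : Type*} [Fintype ι] (a : ι → ℝ) (ha : ∀ x, 0 ≤ a x) (d K r : ℝ) (hK : 0 < K)
    (hd : d = Fintype.card ι) (hd0 : 0 < d) (hr : ∑ x, a x = r) :
    ∑ x, |1 / d - a x / r| ≤ 2 / d * ∑ x, |K * a x - 1| := by
  have hr0 : 0 ≤ r := hr ▸ Finset.sum_nonneg fun x _ => ha x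
  rcases hr0.eq_or_lt with h0 | hpos
  · have hz : ∀ x, a x = 0 := by
      intro x
      rw [← h0] at hr
      exact (Finset.sum_eq_zero_iff_of_nonneg fun x _ => ha x).1 hr x (Finset.mem_univ x)
    simp only [hz, ← h0]
    simp only [zero_div, sub_zero, mul_zero, zero_sub, abs_neg, abs_one, Finset.sum_const,
      Finset.card_univ, nsmul_eq_mul, ← hd]
    rw [abs_of_pos (by positivity)]
    field_simp
    norm_num
  · have hs : ∑ x, (1 / d - a x / r) = 0 := by
      rw [Finset.sum_sub_distrib, ← Finset.sum_div _ a, hr]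
      simp only [Finset.sum_const, Finset.card_univ, nsmul_eq_mul, ← hd]
      field_simp
      simp
    rw [Finset.mul_sum]
    rcases le_total (K * r) d with h | h
    · calc ∑ x, |1 / d - a x / r| = ∑ x, (|1 / d - a x / r| + (1 / d - a x / r)) := by
            rw [Finset.sum_add_distrib, hs, add_zero]
        _ ≤ _ := by
            refine Finset.sum_le_sum fun x _ => ?_
            have h1 : K * a x / d ≤ a x / r := by
              rw [div_le_div_iff₀ hd0 hpos]
              nlinarith [mul_le_mul_of_nonneg_right h (ha x)]
            have h2 : 1 / d - a x / r ≤ 1 / d * |K * a x - 1| := by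
              have := mul_le_mul_of_nonneg_left (neg_abs_le (K * a x - 1)) (one_div_pos.2 hd0).le
              have e : 1 / d * (K * a x - 1) = K * a x / d - 1 / d := by ring
              linarith
            have h3 : 0 ≤ 1 / d * |K * a x - 1| := by positivity
            have e : 2 / d * |K * a x - 1| = 2 * (1 / d * |K * a x - 1|) := by ring
            rw [e]
            rcases abs_cases (1 / d - a x / r) with ⟨h4, _⟩ | ⟨h4, _⟩ <;> rw [h4] <;> linarith
    · calc ∑ x, |1 / d - a x / r| = ∑ x, (|1 / d - a x / r| - (1 / d - a x / r)) := by
            rw [Finset.sum_sub_distrib, hs, sub_zero]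
        _ ≤ _ := by
            refine Finset.sum_le_sum fun x _ => ?_
            have h1 : a x / r ≤ K * a x / d := by
              rw [div_le_div_iff₀ hpos hd0]
              nlinarith [mul_le_mul_of_nonneg_right h (ha x)]
            have h2 : a x / r - 1 / d ≤ 1 / d * |K * a x - 1| := by
              have := mul_le_mul_of_nonneg_left (le_abs_self (K * a x - 1)) (one_div_pos.2 hd0).le
              have e : 1 / d * (K * a x - 1) = K * a x / d - 1 / d := by ring
              linarith
            have h3 : 0 ≤ 1 / d * |K * a x - 1| := by positivity
            have e : 2 / d * |K * a x - 1| = 2 * (1 / d * |K * a x - 1|) := by ring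
            rw [e]
            rcases abs_cases (1 / d - a x / r) with ⟨h4, _⟩ | ⟨h4, _⟩ <;> rw [h4] <;> linarith

section onI
variable {G : Type*} [Group G] {k : ℕ}

lemma onI_mul (g h : G) (I : Finset (Fin k)) : onI (g * h) I = onI g I * onI h I := by
  ext i; simp only [onI, Pi.mul_apply]; split_ifs <;> simp

lemma onI_one (I : Finset (Fin k)) : onI (1 : G) I = 1 := by
  ext i; simp [onI]

lemma onI_eq_one {g : G} {I : Finset (Fin k)} (hI : I.Nonempty) : onI g I = 1 ↔ g = 1 := by
  constructor
  · intro h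
    obtain ⟨i, hi⟩ := hI
    have := congrFun h i
    simpa [onI, hi] using this
  · rintro rfl; exact onI_one I

lemma onI_symm (m : G) (hm : m * m = 1) (I I' : Finset (Fin k)) :
    onI m I * onI m I' = onI m (symmDiff I I') := by
  ext i
  simp only [onI, Pi.mul_apply, Finset.mem_symmDiff]
  by_cases h : i ∈ I <;> by_cases h' : i ∈ I' <;> simp [h, h', hm]

lemma onI_inv (m : G) (hm : m * m = 1) (I : Finset (Fin k)) : (onI m I)⁻¹ = onI m I := by
  rw [inv_eq_iff_mul_eq_one, onI_symm m hm]; ext; simp [onI]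

def resI {V : Type*} [AddCommGroup V] [Module ℂ V] (ρ : Representation ℂ (Fin k → G) V)
    (I : Finset (Fin k)) : Representation ℂ G V where
  toFun g := ρ (onI g I)
  map_one' := by rw [onI_one, map_one]
  map_mul' g h := by rw [onI_mul, map_mul]

variable {V : Type*} [NormedAddCommGroup V] [InnerProductSpace ℂ V]
  {ρ : Representation ℂ (Fin k → G) V}

lemma invProj_idem (ρ : Representation ℂ (Fin k → G) V) (m : G) (hm : m * m = 1) :
    invProj ρ m * invProj ρ m = invProj ρ m := by
  unfold invProj
  rw [smul_mul_smul_comm, Finset.sum_mul_sum]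
  have : ∀ I : Finset (Fin k), ∑ I' : Finset (Fin k), ρ (onI m I) * ρ (onI m I') =
      ∑ I' : Finset (Fin k), ρ (onI m I') := by
    intro I
    simp only [← map_mul, onI_symm m hm]
    refine Function.Bijective.sum_comp (e := fun I' => symmDiff I I') ?_ (fun I' => ρ (onI m I'))
    exact (show Function.Involutive (fun I' => symmDiff I I') from
      fun I' => symmDiff_symmDiff_cancel_left I I').bijective
  simp only [this]
  rw [Finset.sum_const, ← Nat.cast_smul_eq_nsmul ℂ, smul_smul]
  congr 1
  simp

lemma invProj_inner (h : IsUnitaryRep ρ) (m : G) (hm : m * m = 1) (v : V) :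
    ((‖invProj ρ m v‖ ^ 2 : ℝ) : ℂ) = ⟪v, invProj ρ m v⟫_ℂ := by
  have adj : ∀ v w, ⟪invProj ρ m v, w⟫_ℂ = ⟪v, invProj ρ m w⟫_ℂ := by
    intro v w
    unfold invProj
    simp only [LinearMap.sum_apply, LinearMap.smul_apply, sum_inner, inner_sum, inner_smul_left,
      inner_smul_right, unit_adj h, onI_inv m hm]
    have h2 : (starRingEnd ℂ) 2 = 2 := Complex.conj_ofNat 2
    simp [h2]
  conv_rhs => rw [← invProj_idem ρ m hm, Module.End.mul_apply, ← adj]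
  rw [inner_self_eq_norm_sq_to_K]; simp

variable [FiniteDimensional ℂ V]

lemma invProj_rank (ρ : Representation ℂ (Fin k → G) V) (m : G) (hm : m * m = 1) :
    (finrank ℂ (LinearMap.range (invProj ρ m)) : ℂ) = LinearMap.trace ℂ V (invProj ρ m) := by
  refine (LinearMap.IsProj.trace (p := LinearMap.range (invProj ρ m)) ⟨fun v => ⟨v, rfl⟩, ?_⟩).symm
  rintro _ ⟨v, rfl⟩
  rw [← Module.End.mul_apply, invProj_idem ρ m hm]

lemma invProj_trace_conj (ρ : Representation ℂ (Fin k → G) V) (m h : G) :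
    LinearMap.trace ℂ V (invProj ρ (h * m * h⁻¹)) = LinearMap.trace ℂ V (invProj ρ m) := by
  unfold invProj
  simp only [map_smul, map_sum]
  congr 1
  refine Finset.sum_congr rfl fun I _ => ?_
  exact char_conj' (resI ρ I) m h

end onI

end S13

open Module S13

/-- (Corollary 7 of the paper.) With
`H_m(i,b) = ‖Π_m^{(i)} b‖² / rank(Π_m^{(i)})` (convention `x/0 = 0`), the Plancherel average of
the ℓ¹-distance between the uniform distribution and `E_m H_m(i,·)` is at most
`2 · 2^k · (λ + P(Λ))`. -/
theorem stmt13 {G : Type*} [Group G] [Fintype G]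
    {J : Type*} [Fintype J]
    (W : J → Type*) [∀ j, NormedAddCommGroup (W j)] [∀ j, InnerProductSpace ℂ (W j)]
    [∀ j, FiniteDimensional ℂ (W j)]
    (σ : ∀ j, Representation ℂ G (W j)) (hfam : IsCompleteFamily W σ)
    (M : Finset G) (m₀ : G) (hm₀M : m₀ ∈ M)
    (hM : ∀ m : G, m ∈ M ↔ IsConj m₀ m)
    (hinv : ∀ m ∈ M, m * m = 1 ∧ m ≠ 1)
    {k : ℕ} (hk : 1 ≤ k)
    {T : Type*} [Fintype T]
    (Vi : T → Type*) [∀ i, NormedAddCommGroup (Vi i)] [∀ i, InnerProductSpace ℂ (Vi i)]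
    [∀ i, FiniteDimensional ℂ (Vi i)]
    (ρi : ∀ i, Representation ℂ (Fin k → G) (Vi i)) (hfam' : IsCompleteFamily Vi ρi)
    (ι : T → Type*) [∀ i, Fintype (ι i)] (B : ∀ i, OrthonormalBasis (ι i) ℂ (Vi i))
    (Λ : Finset J) (lam : ℝ) (hlam0 : 0 ≤ lam) (hlam1 : lam ≤ 1)
    (hΛ : ∀ j ∉ Λ, ‖repChar (σ j) m₀‖ ≤ lam * (Module.finrank ℂ (W j) : ℝ)) :
    ∑ i, (Module.finrank ℂ (Vi i) : ℝ) ^ 2 / (Fintype.card G : ℝ) ^ k *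
        ∑ x : ι i,
          |1 / (Module.finrank ℂ (Vi i) : ℝ)
            - (1 / (M.card : ℝ)) * ∑ m ∈ M,
                ‖invProj (ρi i) m (B i x)‖ ^ 2
                  / (Module.finrank ℂ (LinearMap.range (invProj (ρi i) m)) : ℝ)|
      ≤ 2 * 2 ^ k *
          (lam + ∑ j ∈ Λ, (Module.finrank ℂ (W j) : ℝ) ^ 2 / (Fintype.card G : ℝ)) := by
  classical
  have hMc : (0 : ℝ) < M.card := by exact_mod_cast Finset.card_pos.2 ⟨m₀, hm₀M⟩
  have hGc : (0 : ℝ) < Fintype.card G := by exact_mod_cast Fintype.card_pos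
  have hdi : ∀ i, (0 : ℝ) < finrank ℂ (Vi i) := fun i => by
    exact_mod_cast finrank_pos' (hfam'.2.1 i)
  have hresU : ∀ i I, IsUnitaryRep (resI (ρi i) I) := fun i I g v w => hfam'.1 i _ v w
  -- the averaged diagonal coefficient
  let c : ∀ i, Finset (Fin k) → ι i → ℂ := fun i I x =>
    ⟪B i x, ((1 / (M.card : ℂ)) • ∑ m ∈ M, resI (ρi i) I m) (B i x)⟫_ℂ
  let a : ∀ i, ι i → ℝ := fun i x => (1 / (M.card : ℝ)) * ∑ m ∈ M, ‖invProj (ρi i) m (B i x)‖ ^ 2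
  have hac : ∀ i x, ((a i x : ℝ) : ℂ) = ((2 : ℂ) ^ k)⁻¹ * ∑ I, c i I x := by
    intro i x
    simp only [a, c]
    push_cast
    have e : ∀ m ∈ M, ((‖invProj (ρi i) m (B i x)‖ : ℂ)) ^ 2 =
        ⟪B i x, invProj (ρi i) m (B i x)⟫_ℂ := fun m hm => by
      rw [← invProj_inner (hfam'.1 i) m (hinv m hm).1]; push_cast; rfl
    rw [Finset.sum_congr rfl e]
    simp only [invProj, LinearMap.smul_apply, LinearMap.sum_apply, inner_smul_right, inner_sum]
    rw [← Finset.mul_sum, ← Finset.mul_sum, Finset.sum_comm]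
    simp only [resI, MonoidHom.coe_mk, OneHom.coe_mk]
    ring
  have hc0 : ∀ i x, c i ∅ x = 1 := by
    intro i x
    have : ∀ m : G, resI (ρi i) ∅ m = 1 := fun m => by
      change ρi i (onI m ∅) = 1
      have : onI m (∅ : Finset (Fin k)) = 1 := by ext; simp [onI]
      rw [this, map_one]
    have hMc' : (M.card : ℂ) ≠ 0 := by exact_mod_cast hMc.ne'
    simp only [c, this]
    rw [Finset.sum_const, ← Nat.cast_smul_eq_nsmul ℂ, smul_smul, one_div, inv_mul_cancel₀ hMc']
    simp
  have hr : ∀ i, ∀ m ∈ M, (finrank ℂ (LinearMap.range (invProj (ρi i) m)) : ℝ) =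
      (finrank ℂ (LinearMap.range (invProj (ρi i) m₀)) : ℝ) := by
    intro i m hm
    have : (finrank ℂ (LinearMap.range (invProj (ρi i) m)) : ℂ) =
      (finrank ℂ (LinearMap.range (invProj (ρi i) m₀)) : ℂ) := by
      rw [invProj_rank _ _ (hinv m hm).1, invProj_rank _ _ (hinv m₀ hm₀M).1]
      obtain ⟨h, rfl⟩ := isConj_iff.1 ((hM m).1 hm)
      exact invProj_trace_conj _ _ _
    exact_mod_cast this
  have hsum : ∀ i, ∑ x, a i x = (finrank ℂ (LinearMap.range (invProj (ρi i) m₀)) : ℝ) := by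
    intro i
    have e : ∀ m ∈ M, ∑ x, ‖invProj (ρi i) m (B i x)‖ ^ 2 =
        (finrank ℂ (LinearMap.range (invProj (ρi i) m₀)) : ℝ) := by
      intro m hm
      rw [← hr i m hm]
      apply Complex.ofReal_injective
      rw [Complex.ofReal_sum, Complex.ofReal_natCast, invProj_rank _ _ (hinv m hm).1,
        LinearMap.trace_eq_sum_inner _ (B i)]
      exact Finset.sum_congr rfl fun x _ => invProj_inner (hfam'.1 i) m (hinv m hm).1 _
    simp only [a]
    rw [← Finset.mul_sum, Finset.sum_comm, Finset.sum_congr rfl e, Finset.sum_const, nsmul_eq_mul]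
    field_simp
  have hterm : ∀ i, ∑ x : ι i,
          |1 / (Module.finrank ℂ (Vi i) : ℝ)
            - (1 / (M.card : ℝ)) * ∑ m ∈ M,
                ‖invProj (ρi i) m (B i x)‖ ^ 2
                  / (Module.finrank ℂ (LinearMap.range (invProj (ρi i) m)) : ℝ)| ≤
      2 / (finrank ℂ (Vi i) : ℝ) * ∑ x, ∑ I ∈ Finset.univ.erase (∅ : Finset (Fin k)), ‖c i I x‖ := by
    intro i
    have h1 := l1 (a i) (fun x => by simp only [a]; positivity) (finrank ℂ (Vi i) : ℝ) (2 ^ k) _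
      (by positivity) (by rw [finrank_eq_card_basis (B i).toBasis]) (hdi i) (hsum i)
    refine le_trans (le_of_eq ?_) (h1.trans ?_)
    · refine Finset.sum_congr rfl fun x _ => ?_
      rw [Finset.sum_congr rfl fun m hm => by rw [hr i m hm], ← Finset.sum_div, ← mul_div_assoc]
    · refine mul_le_mul_of_nonneg_left ?_ (by have := hdi i; positivity)
      refine Finset.sum_le_sum fun x _ => ?_
      have : ((2 ^ k * a i x - 1 : ℝ) : ℂ) = ∑ I ∈ Finset.univ.erase (∅ : Finset (Fin k)), c i I x := by
        push_cast
        rw [hac, ← Finset.add_sum_erase _ _ (Finset.mem_univ (∅ : Finset (Fin k))), hc0]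
        field_simp
        ring
      rw [← Real.norm_eq_abs, ← Complex.norm_real, this]
      exact norm_sum_le _ _
  let P : ∀ i, Finset (Fin k) → J → ℂ := fun i I j =>
    LinearMap.trace ℂ (Vi i) ((resI (ρi i) I).asAlgebraHom (pj (σ j)))
  have hcI : ∀ i I, ∑ x, ‖c i I x‖ ≤ lam * finrank ℂ (Vi i) + ∑ j ∈ Λ, (P i I j).re := by
    intro i I
    calc _ ≤ ∑ x, (lam * ‖B i x‖ ^ 2 +
          ∑ j ∈ Λ, (⟪B i x, (resI (ρi i) I).asAlgebraHom (pj (σ j)) (B i x)⟫_ℂ).re) :=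
          Finset.sum_le_sum fun x _ =>
            key_bound hfam (hresU i I) M m₀ hm₀M hM Λ lam hlam0 hΛ (B i x)
      _ = _ := by
          rw [Finset.sum_add_distrib, Finset.sum_comm]
          congr 1
          · simp [finrank_eq_card_basis (B i).toBasis, mul_comm]
          · refine Finset.sum_congr rfl fun j _ => ?_
            simp only [P]
            rw [LinearMap.trace_eq_sum_inner _ (B i), Complex.re_sum]
  have hcardk : (Fintype.card (Fin k → G) : ℂ) = (Fintype.card G : ℂ) ^ k := by simp
  have hGk : (Fintype.card G : ℂ) ^ k ≠ 0 := pow_ne_zero _ (by exact_mod_cast hGc.ne')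
  have hP : ∀ I : Finset (Fin k), I.Nonempty → ∀ j,
      ∑ i, (finrank ℂ (Vi i) : ℝ) / (Fintype.card G : ℝ) ^ k * (P i I j).re =
        (finrank ℂ (W j) : ℝ) ^ 2 / (Fintype.card G : ℝ) := by
    intro I hI j
    have : ∑ i, (finrank ℂ (Vi i) : ℂ) / (Fintype.card G : ℂ) ^ k * P i I j =
        (finrank ℂ (W j) : ℂ) ^ 2 / (Fintype.card G : ℂ) := by
      simp only [P, pj, alg_el, map_sum, map_smul, smul_eq_mul, Finset.mul_sum]
      rw [Finset.sum_comm]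
      calc _ = ∑ g : G, (finrank ℂ (W j) : ℂ) / (Fintype.card G : ℂ) *
              starRingEnd ℂ (repChar (σ j) g) *
              ∑ i, (finrank ℂ (Vi i) : ℂ) / (Fintype.card (Fin k → G) : ℂ) *
                repChar (ρi i) (onI g I) := by
            refine Finset.sum_congr rfl fun g _ => ?_
            rw [Finset.mul_sum, hcardk]
            refine Finset.sum_congr rfl fun i _ => ?_
            simp only [repChar, resI, MonoidHom.coe_mk, OneHom.coe_mk]
            ring
        _ = _ := by
            simp only [plancherel hfam', onI_eq_one hI]
            simp [repChar]
            ring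
    have h2 := congrArg Complex.re this
    rw [Complex.re_sum] at h2
    convert h2 using 1
    · refine Finset.sum_congr rfl fun i _ => ?_
      rw [← Complex.re_ofReal_mul]; push_cast; rfl
    · rw [← Complex.ofReal_re ((finrank ℂ (W j) : ℝ) ^ 2 / (Fintype.card G : ℝ))]
      push_cast; rfl
  have hdim : ∑ i, (finrank ℂ (Vi i) : ℝ) ^ 2 / (Fintype.card G : ℝ) ^ k = 1 := by
    have h := plancherel hfam' (1 : Fin k → G)
    rw [if_pos rfl, hcardk] at h
    apply Complex.ofReal_injective
    push_cast
    rw [← h]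
    refine Finset.sum_congr rfl fun i _ => ?_
    simp [repChar]
    ring
  set D : ℝ := lam + ∑ j ∈ Λ, (finrank ℂ (W j) : ℝ) ^ 2 / (Fintype.card G : ℝ) with hD
  have hD0 : 0 ≤ D := by positivity
  have hI : ∀ I : Finset (Fin k), I.Nonempty →
      ∑ i, (finrank ℂ (Vi i) : ℝ) / (Fintype.card G : ℝ) ^ k * ∑ x, ‖c i I x‖ ≤ D := by
    intro I hI
    calc _ ≤ ∑ i, (finrank ℂ (Vi i) : ℝ) / (Fintype.card G : ℝ) ^ k *
          (lam * finrank ℂ (Vi i) + ∑ j ∈ Λ, (P i I j).re) :=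
          Finset.sum_le_sum fun i _ => mul_le_mul_of_nonneg_left (hcI i I) (by positivity)
      _ = lam * ∑ i, (finrank ℂ (Vi i) : ℝ) ^ 2 / (Fintype.card G : ℝ) ^ k +
          ∑ j ∈ Λ, ∑ i, (finrank ℂ (Vi i) : ℝ) / (Fintype.card G : ℝ) ^ k * (P i I j).re := by
          rw [Finset.sum_comm, Finset.mul_sum, ← Finset.sum_add_distrib]
          refine Finset.sum_congr rfl fun i _ => ?_
          rw [mul_add, Finset.mul_sum]
          ring
      _ = D := by
          rw [hdim, mul_one, Finset.sum_congr rfl fun j _ => hP I hI j]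
  calc _ ≤ ∑ i, (finrank ℂ (Vi i) : ℝ) ^ 2 / (Fintype.card G : ℝ) ^ k *
        (2 / (finrank ℂ (Vi i) : ℝ) *
          ∑ x, ∑ I ∈ Finset.univ.erase (∅ : Finset (Fin k)), ‖c i I x‖) :=
        Finset.sum_le_sum fun i _ => mul_le_mul_of_nonneg_left (hterm i) (by positivity)
    _ = 2 * ∑ I ∈ Finset.univ.erase (∅ : Finset (Fin k)),
        ∑ i, (finrank ℂ (Vi i) : ℝ) / (Fintype.card G : ℝ) ^ k * ∑ x, ‖c i I x‖ := by
        rw [Finset.sum_comm, Finset.mul_sum]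
        refine Finset.sum_congr rfl fun i _ => ?_
        rw [Finset.sum_comm, ← Finset.mul_sum]
        have := (hdi i).ne'
        field_simp
    _ ≤ 2 * ∑ I ∈ Finset.univ.erase (∅ : Finset (Fin k)), D := by
        refine mul_le_mul_of_nonneg_left (Finset.sum_le_sum fun I h => hI I ?_) (by norm_num)
        exact Finset.nonempty_iff_ne_empty.2 (Finset.ne_of_mem_erase h)
    _ ≤ 2 * ∑ I : Finset (Fin k), D :=
        mul_le_mul_of_nonneg_left (Finset.sum_le_sum_of_subset_of_nonneg (Finset.erase_subset _ _)
          fun _ _ _ => hD0) (by norm_num)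
    _ = 2 * 2 ^ k * D := by
        simp
        ring
end
end

section
/- Let G be a finite group, let (σ_j)_{j∈J} be a complete family of irreducibles for G, let M ⊆ G be a conjugacy class of involutions with representative m₀, let k ≥ 1, let (ρ_i)_{i∈T} be a complete family of irreducibles for G^k acting on spaces V_i of dimensions d_i, and for each i let B_i be an orthonormal basis of V_i. Let Λ ⊆ J, P(Λ) = Σ_{j∈Λ} d_j²/|G|, and let λ ≥ 0 be a real number with |χ_j(m₀)| ≤ λ·d_j for every j ∈ J \ Λ. Then Σ_{i∈T} (d_i²/|G|^k) · (1/d_i) Σ_{b∈B_i} Var_{m∈M} ‖Π_m^{(i)} b‖² ≤ λ + P(Λ) · Σ_{j∈J} d_j, where Π_m^{(i)} = 2^{-k} Σ_{I ⊆ {1,…,k}} ρ_i(m^I). -/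
noncomputable section

open scoped BigOperators InnerProductSpace

open Module.Basis in
lemma aux_trace_quot {V : Type*} [AddCommGroup V] [Module ℂ V] [FiniteDimensional ℂ V]
    (W : Submodule ℂ V) (e : V →ₗ[ℂ] V) (he : W ≤ W.comap e) :
    LinearMap.trace ℂ V e = LinearMap.trace ℂ W (e.restrict he)
      + LinearMap.trace ℂ (V ⧸ W) (W.mapQ W e he) := by
  classical
  let m := Module.Free.ChooseBasisIndex ℂ W
  let bW : Module.Basis m ℂ W := Module.Free.chooseBasis ℂ W
  let n := Module.Free.ChooseBasisIndex ℂ (V ⧸ W)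
  let bQ : Module.Basis n ℂ (V ⧸ W) := Module.Free.chooseBasis ℂ (V ⧸ W)
  let b := sumQuot bW bQ
  rw [LinearMap.trace_eq_matrix_trace ℂ b, LinearMap.trace_eq_matrix_trace ℂ bW,
    LinearMap.trace_eq_matrix_trace ℂ bQ]
  simp only [Matrix.trace, Matrix.diag, Fintype.sum_sum_type]
  congr 1
  · refine Finset.sum_congr rfl fun i _ => ?_
    simp only [b, sumQuot_inl, LinearMap.toMatrix_apply]
    apply sumQuot_repr_inl_of_mem
  · refine Finset.sum_congr rfl fun l _ => ?_
    simp only [LinearMap.toMatrix_apply, sumQuot_repr_inr, b]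
    rw [← sumQuot_inr bW bQ l, W.mapQ_apply]
    simp

lemma aux_char_iso {G V₁ V₂ : Type*} [Group G] [AddCommGroup V₁] [Module ℂ V₁]
    [AddCommGroup V₂] [Module ℂ V₂]
    (ρ₁ : Representation ℂ G V₁) (ρ₂ : Representation ℂ G V₂) (h : RepIso ρ₁ ρ₂) (g : G) :
    repChar ρ₁ g = repChar ρ₂ g := by
  obtain ⟨e, he⟩ := h
  unfold repChar
  rw [← LinearMap.trace_conj' (ρ₁ g) e]
  congr 1
  ext v
  simp [LinearEquiv.conj_apply, he]

lemma aux_irr {G V : Type*} [Group G] [AddCommGroup V] [Module ℂ V]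
    (ρ : Representation ℂ G V) (h : IsIrreducibleRep ρ) : Representation.IsIrreducible ρ := by
  obtain ⟨⟨v, hv⟩, h⟩ := h
  refine { exists_pair_ne := ⟨⊥, ⊤, ?_⟩, eq_bot_or_eq_top := ?_ }
  · intro hbt
    have : v ∈ (⊥ : Subrepresentation ρ) := by rw [hbt]; trivial
    exact hv this
  · intro U
    rcases h U.toSubmodule (fun g v hv => U.apply_mem_toSubmodule g hv) with h | h
    · left; exact Subrepresentation.toSubmodule_injective h
    · right; exact Subrepresentation.toSubmodule_injective h

lemma aux_decomp {G : Type*} [Group G] {J : Type*} [Fintype J]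
    (W : J → Type*) [∀ j, NormedAddCommGroup (W j)] [∀ j, InnerProductSpace ℂ (W j)]
    [∀ j, FiniteDimensional ℂ (W j)]
    (σ : ∀ j, Representation ℂ G (W j)) (hfam : IsCompleteFamily W σ) (n : ℕ) :
    ∀ (U : Type) [AddCommGroup U] [Module ℂ U] [FiniteDimensional ℂ U]
      (τ : Representation ℂ G U), Module.finrank ℂ U = n →
      ∃ c : J → ℂ, ∀ g, repChar τ g = ∑ j, c j * repChar (σ j) g := by
  classical
  induction n using Nat.strong_induction_on with
  | _ n ih =>
  intro U _ _ _ τ hU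
  by_cases hirr : IsIrreducibleRep τ
  · obtain ⟨j, hj⟩ := hfam.2.2.2 U τ hirr
    refine ⟨fun i => if i = j then 1 else 0, fun g => ?_⟩
    simp [aux_char_iso _ _ hj g]
  · by_cases hz : ∃ v : U, v ≠ 0
    · have : ∃ S : Submodule ℂ U, (∀ (g : G) (v : U), v ∈ S → τ g v ∈ S) ∧ S ≠ ⊥ ∧ S ≠ ⊤ := by
        by_contra hcon
        push Not at hcon
        refine hirr ⟨hz, fun S hS => ?_⟩
        by_cases hb : S = ⊥
        · exact Or.inl hb
        · exact Or.inr (hcon S hS hb)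
      obtain ⟨S, hS, hb, ht⟩ := this
      have hle : ∀ g, S ≤ S.comap (τ g) := fun g v hv => hS g v hv
      have h1 : Module.finrank ℂ S < n := hU ▸ Submodule.finrank_lt ht
      have h2 : Module.finrank ℂ (U ⧸ S) < n := by
        have := Submodule.finrank_quotient_add_finrank S
        have h3 : 0 < Module.finrank ℂ S := by
          rw [Module.finrank_pos_iff]
          exact Submodule.nontrivial_iff_ne_bot.mpr hb
        omega
      obtain ⟨c1, hc1⟩ := ih _ h1 S (τ.subrepresentation S hle) rfl
      obtain ⟨c2, hc2⟩ := ih _ h2 (U ⧸ S) (τ.quotient S hle) rfl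
      refine ⟨fun j => c1 j + c2 j, fun g => ?_⟩
      have := aux_trace_quot S (τ g) (hle g)
      simp only [add_mul, Finset.sum_add_distrib, ← hc1, ← hc2]
      exact this
    · push Not at hz
      refine ⟨0, fun g => ?_⟩
      have : τ g = 0 := by ext v; exact hz _
      simp [repChar, this]

lemma aux_regular {G : Type*} [Group G] [Fintype G] [DecidableEq G] {J : Type*} [Fintype J]
    (W : J → Type*) [∀ j, NormedAddCommGroup (W j)] [∀ j, InnerProductSpace ℂ (W j)]
    [∀ j, FiniteDimensional ℂ (W j)]
    (σ : ∀ j, Representation ℂ G (W j)) (hfam : IsCompleteFamily W σ) (g : G) :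
    ∑ j, (Module.finrank ℂ (W j) : ℂ) * repChar (σ j) g
      = if g = 1 then (Fintype.card G : ℂ) else 0 := by
  classical
  let e := Fintype.equivFin G
  let τ : Representation ℂ G (Fin (Fintype.card G) → ℂ) :=
    { toFun := fun g => LinearMap.funLeft ℂ ℂ (fun x => e (g⁻¹ * e.symm x))
      map_one' := by ext; simp [LinearMap.funLeft]
      map_mul' := fun a b => by
        refine LinearMap.ext fun f => funext fun x => ?_
        simp [LinearMap.funLeft, mul_assoc] }
  have hτ : ∀ g, repChar τ g = if g = 1 then (Fintype.card G : ℂ) else 0 := by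
    intro g
    unfold repChar
    rw [LinearMap.trace_eq_matrix_trace ℂ (Pi.basisFun ℂ (Fin (Fintype.card G)))]
    simp only [Matrix.trace, Matrix.diag, LinearMap.toMatrix_apply, Pi.basisFun_apply,
      Pi.basisFun_repr]
    have : ∀ x, (τ g (Pi.single x 1)) x = if g = 1 then (1 : ℂ) else 0 := by
      intro x
      simp only [τ, MonoidHom.coe_mk, OneHom.coe_mk, LinearMap.funLeft_apply, Pi.single_apply]
      congr 1
      rw [← e.symm.injective.eq_iff]
      simp
    simp [this]
  obtain ⟨c, hc⟩ := aux_decomp W σ hfam _ _ τ rfl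
  have : Invertible (Nat.card G : ℂ) := invertibleOfNonzero (by simp)
  have hN : (Nat.card G : ℂ) ≠ 0 := by simp
  have key : ∀ j, c j = Module.finrank ℂ (W j) := by
    intro j
    have horth : ∀ i, (Nat.card G : ℂ)⁻¹ * ∑ g : G, repChar (σ i) g * repChar (σ j) g⁻¹
        = if i = j then 1 else 0 := by
      intro i
      have := aux_irr _ (hfam.2.1 i)
      have := aux_irr _ (hfam.2.1 j)
      have h := Representation.char_orthonormal (σ i) (σ j)
      unfold Representation.character at h
      unfold repChar
      rw [h]
      by_cases hij : i = j
      · subst hij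
        have : Nonempty ((σ i).Equiv (σ i)) := ⟨Representation.Equiv.refl _⟩
        simp [this]
      · have : ¬ Nonempty ((σ j).Equiv (σ i)) := by
          rintro ⟨f⟩
          exact hfam.2.2.1 j i (Ne.symm hij) ⟨f.toLinearEquiv, fun g v => Representation.IntertwiningMap.isIntertwining _ _ f.toIntertwiningMap g v⟩
        simp [this, hij]
    have h1 : (Nat.card G : ℂ)⁻¹ * ∑ g : G, repChar τ g * repChar (σ j) g⁻¹ = c j := by
      simp only [hc, Finset.sum_mul]
      rw [Finset.sum_comm, Finset.mul_sum]
      have : ∀ i, (Nat.card G : ℂ)⁻¹ * ∑ g : G, c i * repChar (σ i) g * repChar (σ j) g⁻¹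
          = c i * if i = j then 1 else 0 := by
        intro i
        rw [← horth i]
        simp only [mul_assoc, ← Finset.mul_sum]
        ring
      rw [Finset.sum_congr rfl fun i _ => this i]
      simp
    rw [← h1]
    simp only [hτ, ite_mul, zero_mul]
    simp [repChar]
  rw [← hτ, hc]
  simp [key]

lemma aux_classavg {G : Type*} [Group G] [Fintype G]
    (M : Finset G) (m₀ : G) (hm₀M : m₀ ∈ M)
    (hM : ∀ m : G, m ∈ M ↔ IsConj m₀ m) (f : G → ℂ) :
    (1 / (M.card : ℂ)) * ∑ m ∈ M, f m
      = (1 / (Fintype.card G : ℂ)) * ∑ h : G, f (h * m₀ * h⁻¹) := by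
  have h1 : ∑ h : G, ∑ m ∈ M, f (h * m * h⁻¹) = Fintype.card G * ∑ m ∈ M, f m := by
    have : ∀ h : G, ∑ m ∈ M, f (h * m * h⁻¹) = ∑ m ∈ M, f m := by
      intro h
      refine Finset.sum_bij' (fun m _ => h * m * h⁻¹) (fun m _ => h⁻¹ * m * h) ?_ ?_ ?_ ?_ ?_
      · intro m hm
        rw [hM] at hm ⊢
        exact hm.trans (isConj_iff.2 ⟨h, rfl⟩)
      · intro m hm
        rw [hM] at hm ⊢
        exact hm.trans (isConj_iff.2 ⟨h⁻¹, by simp⟩)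
      · intros; group
      · intros; group
      · intros; rfl
    simp [this]
  have h2 : ∑ h : G, ∑ m ∈ M, f (h * m * h⁻¹) = M.card * ∑ h : G, f (h * m₀ * h⁻¹) := by
    rw [Finset.sum_comm]
    have : ∀ m ∈ M, ∑ h : G, f (h * m * h⁻¹) = ∑ h : G, f (h * m₀ * h⁻¹) := by
      intro m hm
      obtain ⟨c, rfl⟩ := isConj_iff.1 ((hM m).1 hm)
      refine Fintype.sum_equiv (Equiv.mulRight c) _ _ fun h => ?_
      simp [mul_assoc]
    rw [Finset.sum_congr rfl this]
    simp
  have hc : (M.card : ℂ) ≠ 0 := by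
    exact_mod_cast (Finset.card_pos.2 ⟨m₀, hm₀M⟩).ne'
  have hG : (Fintype.card G : ℂ) ≠ 0 := by simp
  field_simp
  rw [mul_comm, ← h1, h2]

lemma aux_schur {G V : Type*} [Group G] [Fintype G] [AddCommGroup V] [Module ℂ V]
    [FiniteDimensional ℂ V]
    (ρ : Representation ℂ G V) (hρ : IsIrreducibleRep ρ) (m g : G) :
    (Module.finrank ℂ V : ℂ) * ∑ h : G, repChar ρ (g * (h * m * h⁻¹))
      = Fintype.card G * repChar ρ m * repChar ρ g := by
  obtain ⟨⟨v, hv⟩, hirr⟩ := hρ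
  have : Nontrivial V := ⟨v, 0, hv⟩
  let A : V →ₗ[ℂ] V := ∑ h : G, ρ (h * m * h⁻¹)
  have hcomm : ∀ g v, A (ρ g v) = ρ g (A v) := by
    intro g v
    have : A * ρ g = ρ g * A := by
      simp only [A, Finset.sum_mul, Finset.mul_sum, ← map_mul]
      refine Fintype.sum_equiv (Equiv.mulLeft g⁻¹) _ _ fun h => ?_
      simp [mul_assoc]
    exact LinearMap.congr_fun this v
  obtain ⟨c, hc⟩ := Module.End.exists_eigenvalue A
  have hA : A = c • LinearMap.id := by
    rcases hirr (Module.End.eigenspace A c) (by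
      intro g v hv
      rw [Module.End.mem_eigenspace_iff] at hv ⊢
      rw [hcomm, hv, map_smul]) with h | h
    · exact absurd h hc
    · ext v
      have : v ∈ Module.End.eigenspace A c := by rw [h]; trivial
      simpa [Module.End.mem_eigenspace_iff] using this
  have htr : ∀ g, ∑ h : G, repChar ρ (g * (h * m * h⁻¹)) = c * repChar ρ g := by
    intro g
    have : LinearMap.trace ℂ V (ρ g * A) = c * repChar ρ g := by
      rw [hA]
      have : ρ g * (c • LinearMap.id) = c • ρ g := by ext; simp
      rw [this]; simp [repChar]
    rw [← this]
    simp [A, Finset.mul_sum, repChar]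
  have h1 := htr 1
  have h2 : ∀ h : G, repChar ρ (1 * (h * m * h⁻¹)) = repChar ρ m := by
    intro h
    rw [one_mul]
    exact Representation.char_conj ρ m h
  have h3 : repChar ρ 1 = Module.finrank ℂ V := by simp [repChar]
  simp only [h2, h3] at h1
  rw [htr]
  simp at h1
  rw [h1]; ring

lemma aux_class {G : Type*} [Group G] [Fintype G] {J : Type*} [Fintype J]
    (W : J → Type*) [∀ j, NormedAddCommGroup (W j)] [∀ j, InnerProductSpace ℂ (W j)]
    [∀ j, FiniteDimensional ℂ (W j)]
    (σ : ∀ j, Representation ℂ G (W j)) (hfam : IsCompleteFamily W σ)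
    (M : Finset G) (m₀ : G) (hm₀M : m₀ ∈ M)
    (hM : ∀ m : G, m ∈ M ↔ IsConj m₀ m) (f : G → ℂ) :
    (1 / (M.card : ℂ)) * ∑ m ∈ M, f m
      = (1 / (Fintype.card G : ℂ)) * ∑ j, repChar (σ j) m₀⁻¹ * ∑ g : G, repChar (σ j) g * f g := by
  classical
  rw [aux_classavg M m₀ hm₀M hM f]
  congr 1
  have hG : (Fintype.card G : ℂ) ≠ 0 := by simp
  apply mul_left_cancel₀ hG
  have h1 : ∀ g h : G, ∑ j, (Module.finrank ℂ (W j) : ℂ) * repChar (σ j) (g * (h * m₀⁻¹ * h⁻¹))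
      = if g = h * m₀ * h⁻¹ then (Fintype.card G : ℂ) else 0 := by
    intro g h
    rw [aux_regular W σ hfam]
    congr 1
    rw [← eq_inv_iff_mul_eq_one]
    simp [mul_assoc]
  calc (Fintype.card G : ℂ) * ∑ h : G, f (h * m₀ * h⁻¹)
      = ∑ h : G, ∑ g : G, f g * if g = h * m₀ * h⁻¹ then (Fintype.card G : ℂ) else 0 := by
        simp [Finset.mul_sum, mul_comm]
    _ = ∑ g : G, ∑ j, f g * ((Module.finrank ℂ (W j) : ℂ) *
          ∑ h : G, repChar (σ j) (g * (h * m₀⁻¹ * h⁻¹))) := by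
        simp only [← h1]
        rw [Finset.sum_comm]
        refine Finset.sum_congr rfl fun g _ => ?_
        simp only [Finset.mul_sum]
        rw [Finset.sum_comm]
    _ = _ := by
        simp only [aux_schur _ (hfam.2.1 _)]
        rw [Finset.sum_comm]
        simp only [Finset.mul_sum]
        refine Finset.sum_congr rfl fun j _ => Finset.sum_congr rfl fun g _ => ?_
        ring

lemma aux_gram {G E : Type*} [Group G] [Fintype G] [NormedAddCommGroup E] [InnerProductSpace ℂ E]
    (f : G → ℂ) (u u' : G → E) (h : ∀ a b, ⟪u a, u' b⟫_ℂ = f (a⁻¹ * b)) :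
    (Fintype.card G : ℂ) * ∑ g, f g = ⟪∑ g, u g, ∑ g, u' g⟫_ℂ := by
  rw [sum_inner]
  simp only [inner_sum, h]
  have : ∀ a : G, ∑ b, f (a⁻¹ * b) = ∑ g, f g := fun a =>
    Fintype.sum_equiv (Equiv.mulLeft a⁻¹) _ _ fun h => rfl
  simp [this]

lemma aux_gramN {G E X : Type*} [Group G] [Fintype G] [NormedAddCommGroup E]
    [InnerProductSpace ℂ E]
    (f : X → X → G → ℂ) (u : X → G → E) (h : ∀ x y a b, ⟪u x a, u y b⟫_ℂ = f x y (a⁻¹ * b)) :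
    ∃ N : X → ℝ, (∀ x, 0 ≤ N x) ∧ (∀ x, ∑ g, f x x g = (N x : ℂ)) ∧
      ∀ x y, ‖∑ g, f x y g‖ ^ 2 ≤ N x * N y := by
  have hG : (0 : ℝ) < Fintype.card G := by exact_mod_cast Fintype.card_pos
  have hGC : (Fintype.card G : ℂ) ≠ 0 := by simp
  let U : X → E := fun x => ∑ g, u x g
  have hA : ∀ x y, (Fintype.card G : ℂ) * ∑ g, f x y g = ⟪U x, U y⟫_ℂ := fun x y =>
    aux_gram _ _ _ (h x y)
  refine ⟨fun x => ‖U x‖ ^ 2 / Fintype.card G, fun x => by positivity, ?_, ?_⟩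
  · intro x
    have := hA x x
    rw [inner_self_eq_norm_sq_to_K] at this
    push_cast
    rw [eq_div_iff hGC, mul_comm, this]
    rfl
  · intro x y
    have h1 : (Fintype.card G : ℝ) * ‖∑ g, f x y g‖ ≤ ‖U x‖ * ‖U y‖ := by
      have := congrArg norm (hA x y)
      rw [norm_mul, Complex.norm_natCast] at this
      rw [this]
      exact norm_inner_le_norm _ _
    have h2 : ‖∑ g, f x y g‖ ≤ ‖U x‖ * ‖U y‖ / Fintype.card G := by
      rw [le_div_iff₀ hG]; linarith
    calc ‖∑ g, f x y g‖ ^ 2 ≤ (‖U x‖ * ‖U y‖ / Fintype.card G) ^ 2 := by gcongr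
      _ = _ := by ring

lemma aux_unit {G V : Type*} [Group G] [NormedAddCommGroup V] [InnerProductSpace ℂ V]
    (ρ : Representation ℂ G V) (hρ : IsUnitaryRep ρ) (a b : G) (v w : V) :
    ⟪ρ a v, ρ b w⟫_ℂ = ⟪v, ρ (a⁻¹ * b) w⟫_ℂ := by
  rw [← hρ a v]
  simp [← Module.End.mul_apply, ← map_mul]

lemma aux_char_sum {G V ι : Type*} [Group G] [NormedAddCommGroup V] [InnerProductSpace ℂ V]
    [Fintype ι] (e : OrthonormalBasis ι ℂ V) (ρ : Representation ℂ G V) (g : G) :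
    repChar ρ g = ∑ x, ⟪e x, ρ g (e x)⟫_ℂ := by
  unfold repChar
  rw [LinearMap.trace_eq_sum_inner _ e]

lemma aux_nrm {G V : Type*} [Group G] [NormedAddCommGroup V] [InnerProductSpace ℂ V]
    (ρ : Representation ℂ G V) (hρ : IsUnitaryRep ρ) (g : G) (v : V) : ‖ρ g v‖ = ‖v‖ := by
  have := hρ g v v
  rw [inner_self_eq_norm_sq_to_K, inner_self_eq_norm_sq_to_K] at this
  have h : ‖ρ g v‖ ^ 2 = ‖v‖ ^ 2 := by exact_mod_cast this
  exact (sq_eq_sq₀ (norm_nonneg _) (norm_nonneg _)).1 h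

lemma aux_char_le {G V : Type*} [Group G] [NormedAddCommGroup V] [InnerProductSpace ℂ V]
    [FiniteDimensional ℂ V]
    (ρ : Representation ℂ G V) (hρ : IsUnitaryRep ρ) (g : G) :
    ‖repChar ρ g‖ ≤ Module.finrank ℂ V := by
  rw [aux_char_sum (stdOrthonormalBasis ℂ V)]
  refine (norm_sum_le _ _).trans ?_
  calc _ ≤ ∑ x : Fin (Module.finrank ℂ V), (1 : ℝ) := by
        refine Finset.sum_le_sum fun x _ => (norm_inner_le_norm _ _).trans ?_
        simp [aux_nrm ρ hρ]
    _ = _ := by simp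

open scoped TensorProduct in
/-- positivity of the pairing with φ, and Hilbert--Schmidt versus trace -/
lemma aux_pair {G V W : Type*} [Group G] [Fintype G] [NormedAddCommGroup V]
    [InnerProductSpace ℂ V]
    [NormedAddCommGroup W] [InnerProductSpace ℂ W] [FiniteDimensional ℂ W]
    (ρ : Representation ℂ G V) (hρ : IsUnitaryRep ρ)
    (σ : Representation ℂ G W) (hσ : IsUnitaryRep σ) (b : V) :
    ∃ t : ℝ, 0 ≤ t ∧ ∑ g, repChar σ g * ⟪b, ρ g b⟫_ℂ = (t : ℂ) ∧
      (∑ g, ∑ h, ⟪b, ρ g b⟫_ℂ * starRingEnd ℂ ⟪b, ρ h b⟫_ℂ * repChar σ (h⁻¹ * g)).re ≤ t ^ 2 := by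
  let e := stdOrthonormalBasis ℂ W
  let A : Fin (Module.finrank ℂ W) → Fin (Module.finrank ℂ W) → ℂ := fun x y =>
    ∑ g, ⟪e x, σ g (e y)⟫_ℂ * ⟪b, ρ g b⟫_ℂ
  obtain ⟨N, hN, hAxx, hAxy⟩ := aux_gramN (G := G) (fun x y g => ⟪e x, σ g (e y)⟫_ℂ * ⟪b, ρ g b⟫_ℂ)
    (fun x g => σ g (e x) ⊗ₜ[ℂ] ρ g b) (by
      intro x y a c
      rw [TensorProduct.inner_tmul, aux_unit σ hσ, aux_unit ρ hρ])
  refine ⟨∑ x, N x, Finset.sum_nonneg fun x _ => hN x, ?_, ?_⟩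
  · rw [Complex.ofReal_sum]
    simp only [← hAxx, aux_char_sum e, Finset.sum_mul]
    rw [Finset.sum_comm]
  · have h1 : ∑ g, ∑ h, ⟪b, ρ g b⟫_ℂ * starRingEnd ℂ ⟪b, ρ h b⟫_ℂ * repChar σ (h⁻¹ * g)
        = ∑ y, ∑ x, A x y * starRingEnd ℂ (A x y) := by
      have : ∀ g h, repChar σ (h⁻¹ * g)
          = ∑ y, ∑ x, ⟪e x, σ g (e y)⟫_ℂ * starRingEnd ℂ ⟪e x, σ h (e y)⟫_ℂ := by
        intro g h
        rw [aux_char_sum e]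
        refine Finset.sum_congr rfl fun y _ => ?_
        rw [← aux_unit σ hσ, ← e.sum_inner_mul_inner]
        refine Finset.sum_congr rfl fun x _ => ?_
        rw [inner_conj_symm, mul_comm]
      simp only [this, A, map_sum, Finset.sum_mul_sum]
      simp only [Finset.mul_sum]
      calc _ = ∑ g, ∑ y, ∑ h, ∑ x, ⟪b, ρ g b⟫_ℂ * starRingEnd ℂ ⟪b, ρ h b⟫_ℂ *
              (⟪e x, σ g (e y)⟫_ℂ * starRingEnd ℂ ⟪e x, σ h (e y)⟫_ℂ) :=
            Finset.sum_congr rfl fun g _ => Finset.sum_comm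
        _ = ∑ y, ∑ g, ∑ h, ∑ x, ⟪b, ρ g b⟫_ℂ * starRingEnd ℂ ⟪b, ρ h b⟫_ℂ *
              (⟪e x, σ g (e y)⟫_ℂ * starRingEnd ℂ ⟪e x, σ h (e y)⟫_ℂ) := Finset.sum_comm
        _ = ∑ y, ∑ g, ∑ x, ∑ h, ⟪b, ρ g b⟫_ℂ * starRingEnd ℂ ⟪b, ρ h b⟫_ℂ *
              (⟪e x, σ g (e y)⟫_ℂ * starRingEnd ℂ ⟪e x, σ h (e y)⟫_ℂ) :=
            Finset.sum_congr rfl fun y _ => Finset.sum_congr rfl fun g _ => Finset.sum_comm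
        _ = ∑ y, ∑ x, ∑ g, ∑ h, ⟪b, ρ g b⟫_ℂ * starRingEnd ℂ ⟪b, ρ h b⟫_ℂ *
              (⟪e x, σ g (e y)⟫_ℂ * starRingEnd ℂ ⟪e x, σ h (e y)⟫_ℂ) :=
            Finset.sum_congr rfl fun y _ => Finset.sum_comm
        _ = _ := by
            refine Finset.sum_congr rfl fun y _ => Finset.sum_congr rfl fun x _ =>
              Finset.sum_congr rfl fun g _ => Finset.sum_congr rfl fun h _ => ?_
            rw [map_mul]; ring
    rw [h1, sq, Finset.sum_mul_sum, Finset.sum_comm]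
    simp only [Complex.re_sum]
    refine Finset.sum_le_sum fun x _ => Finset.sum_le_sum fun y _ => ?_
    rw [Complex.mul_conj, Complex.normSq_eq_norm_sq, Complex.ofReal_re]
    exact hAxy x y

open scoped TensorProduct in
lemma aux_pair2 {G V W : Type*} [Group G] [Fintype G] [NormedAddCommGroup V]
    [InnerProductSpace ℂ V]
    [NormedAddCommGroup W] [InnerProductSpace ℂ W] [FiniteDimensional ℂ W]
    (ρ : Representation ℂ G V) (hρ : IsUnitaryRep ρ)
    (σ : Representation ℂ G W) (hσ : IsUnitaryRep σ) (b : V) :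
    ∃ t : ℝ, 0 ≤ t ∧ ∑ g, repChar σ g * ⟪b, ρ g b⟫_ℂ ^ 2 = (t : ℂ) := by
  let e := stdOrthonormalBasis ℂ W
  obtain ⟨N, hN, hAxx, -⟩ := aux_gramN (G := G)
    (fun x y g => ⟪e x, σ g (e y)⟫_ℂ * ⟪b, ρ g b⟫_ℂ ^ 2)
    (fun x g => σ g (e x) ⊗ₜ[ℂ] (ρ g b ⊗ₜ[ℂ] ρ g b)) (by
      intro x y a c
      rw [TensorProduct.inner_tmul, TensorProduct.inner_tmul, aux_unit σ hσ, aux_unit ρ hρ, sq])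
  refine ⟨∑ x, N x, Finset.sum_nonneg fun x _ => hN x, ?_⟩
  rw [Complex.ofReal_sum]
  simp only [← hAxx, aux_char_sum e, Finset.sum_mul]
  rw [Finset.sum_comm]

lemma aux_parseval {G : Type*} [Group G] [Fintype G] {J : Type*} [Fintype J]
    (W : J → Type*) [∀ j, NormedAddCommGroup (W j)] [∀ j, InnerProductSpace ℂ (W j)]
    [∀ j, FiniteDimensional ℂ (W j)]
    (σ : ∀ j, Representation ℂ G (W j)) (hfam : IsCompleteFamily W σ)
    {V : Type*} [NormedAddCommGroup V] [InnerProductSpace ℂ V]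
    (ρ : Representation ℂ G V) (hρ : IsUnitaryRep ρ) (b : V) (hb : ‖b‖ = 1) :
    ∑ g, ‖⟪b, ρ g b⟫_ℂ‖ ^ 2 ≤ ∑ j, (∑ g, repChar (σ j) g * ⟪b, ρ g b⟫_ℂ).re := by
  classical
  choose t ht0 ht hts using fun j => aux_pair ρ hρ (σ j) (hfam.1 j) b
  have hG : (0 : ℝ) < Fintype.card G := by exact_mod_cast Fintype.card_pos
  simp only [ht, Complex.ofReal_re]
  have h1 : ∑ j, (Module.finrank ℂ (W j) : ℝ) * t j = Fintype.card G := by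
    have : ∑ j, (Module.finrank ℂ (W j) : ℂ) * (t j : ℂ) = Fintype.card G := by
      simp only [← ht, Finset.mul_sum, ← mul_assoc]
      rw [Finset.sum_comm]
      simp only [← Finset.sum_mul, aux_regular W σ hfam, ite_mul, zero_mul]
      simp [inner_self_eq_norm_sq_to_K, hb]
    exact_mod_cast this
  have h2 : ∑ j, (Module.finrank ℂ (W j) : ℂ) *
      ∑ g, ∑ h, ⟪b, ρ g b⟫_ℂ * starRingEnd ℂ ⟪b, ρ h b⟫_ℂ * repChar (σ j) (h⁻¹ * g)
      = ((Fintype.card G * ∑ g, ‖⟪b, ρ g b⟫_ℂ‖ ^ 2 : ℝ) : ℂ) := by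
    calc _ = ∑ g, ∑ h, ⟪b, ρ g b⟫_ℂ * starRingEnd ℂ ⟪b, ρ h b⟫_ℂ *
          ∑ j, (Module.finrank ℂ (W j) : ℂ) * repChar (σ j) (h⁻¹ * g) := by
          simp only [Finset.mul_sum]
          rw [Finset.sum_comm]
          refine Finset.sum_congr rfl fun g _ => ?_
          rw [Finset.sum_comm]
          refine Finset.sum_congr rfl fun h _ => Finset.sum_congr rfl fun j _ => ?_
          ring
      _ = ∑ g, ∑ h, if g = h then (Fintype.card G : ℂ) *
          (⟪b, ρ g b⟫_ℂ * starRingEnd ℂ ⟪b, ρ g b⟫_ℂ) else 0 := by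
          refine Finset.sum_congr rfl fun g _ => Finset.sum_congr rfl fun h _ => ?_
          rw [aux_regular W σ hfam]
          by_cases hgh : g = h
          · subst hgh; simp [mul_comm]
          · have : ¬ (h⁻¹ * g = 1) := by
              intro h'; exact hgh (inv_mul_eq_one.1 h').symm
            simp [hgh, this]
      _ = _ := by
          simp only [Finset.sum_ite_eq, Finset.mem_univ, if_true, Complex.mul_conj,
            Complex.normSq_eq_norm_sq]
          push_cast
          rw [Finset.mul_sum]
  have h3 : Fintype.card G * ∑ g, ‖⟪b, ρ g b⟫_ℂ‖ ^ 2
      ≤ ∑ j, (Module.finrank ℂ (W j) : ℝ) * t j ^ 2 := by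
    have := congrArg Complex.re h2
    rw [Complex.ofReal_re] at this
    rw [← this, Complex.re_sum]
    refine Finset.sum_le_sum fun j _ => ?_
    have h4 : ∀ (n : ℕ) (z : ℂ), ((n : ℂ) * z).re = n * z.re := by intros; simp
    rw [h4]
    exact mul_le_mul_of_nonneg_left (hts j) (Nat.cast_nonneg _)
  have h5 : ∀ j, (Module.finrank ℂ (W j) : ℝ) * t j ≤ Fintype.card G := by
    intro j
    rw [← h1]
    exact Finset.single_le_sum (f := fun j => (Module.finrank ℂ (W j) : ℝ) * t j)
      (fun i _ => mul_nonneg (Nat.cast_nonneg _) (ht0 i)) (Finset.mem_univ j)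
  have h6 : ∑ j, (Module.finrank ℂ (W j) : ℝ) * t j ^ 2 ≤ Fintype.card G * ∑ j, t j := by
    rw [Finset.mul_sum]
    refine Finset.sum_le_sum fun j _ => ?_
    rw [sq, ← mul_assoc]
    exact mul_le_mul_of_nonneg_right (h5 j) (ht0 j)
  exact le_of_mul_le_mul_left (h3.trans h6) hG

lemma aux_single {G : Type*} [Group G] [Fintype G] {J : Type*} [Fintype J]
    (W : J → Type*) [∀ j, NormedAddCommGroup (W j)] [∀ j, InnerProductSpace ℂ (W j)]
    [∀ j, FiniteDimensional ℂ (W j)]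
    (σ : ∀ j, Representation ℂ G (W j)) (hfam : IsCompleteFamily W σ)
    (M : Finset G) (m₀ : G) (hm₀M : m₀ ∈ M)
    (hM : ∀ m : G, m ∈ M ↔ IsConj m₀ m)
    (hinv : ∀ m ∈ M, m * m = 1 ∧ m ≠ 1)
    (Λ : Finset J) (lam : ℝ) (hlam : 0 ≤ lam)
    (hΛ : ∀ j ∉ Λ, ‖repChar (σ j) m₀‖ ≤ lam * (Module.finrank ℂ (W j) : ℝ))
    {V : Type*} [NormedAddCommGroup V] [InnerProductSpace ℂ V]
    (ρ : Representation ℂ G V) (hρ : IsUnitaryRep ρ) (b : V) (hb : ‖b‖ = 1) :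
    (1 / (M.card : ℝ)) * ∑ m ∈ M, (⟪b, ρ m b⟫_ℂ).re ^ 2 ≤
      lam + (∑ j ∈ Λ, (Module.finrank ℂ (W j) : ℝ) ^ 2 / (Fintype.card G : ℝ)) *
        ∑ j, (∑ g, repChar (σ j) g * ⟪b, ρ g b⟫_ℂ).re := by
  classical
  have hG : (0 : ℝ) < Fintype.card G := by exact_mod_cast Fintype.card_pos
  choose t ht0 ht using fun j => aux_pair2 ρ hρ (σ j) (hfam.1 j) b
  have hreal : ∀ m ∈ M, (((⟪b, ρ m b⟫_ℂ).re : ℝ) : ℂ) = ⟪b, ρ m b⟫_ℂ := by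
    intro m hm
    apply Complex.conj_eq_iff_re.1
    rw [inner_conj_symm]
    have h1 := aux_unit ρ hρ m 1 b b
    have h2 : m⁻¹ = m := inv_eq_of_mul_eq_one_left (hinv m hm).1
    simpa [h2] using h1
  have hE : (((1 / (M.card : ℝ)) * ∑ m ∈ M, (⟪b, ρ m b⟫_ℂ).re ^ 2 : ℝ) : ℂ)
      = (1 / (Fintype.card G : ℂ)) * ∑ j, repChar (σ j) m₀ * (t j : ℂ) := by
    have h2 : m₀⁻¹ = m₀ := inv_eq_of_mul_eq_one_left (hinv m₀ hm₀M).1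
    have := aux_class W σ hfam M m₀ hm₀M hM (fun g => ⟪b, ρ g b⟫_ℂ ^ 2)
    simp only [ht, h2] at this
    rw [← this]
    push_cast
    congr 1
    exact Finset.sum_congr rfl fun m hm => by rw [hreal m hm]
  have h1 : ∑ j, (Module.finrank ℂ (W j) : ℝ) * t j = Fintype.card G := by
    have : ∑ j, (Module.finrank ℂ (W j) : ℂ) * (t j : ℂ) = Fintype.card G := by
      simp only [← ht, Finset.mul_sum, ← mul_assoc]
      rw [Finset.sum_comm]
      simp only [← Finset.sum_mul, aux_regular W σ hfam, ite_mul, zero_mul]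
      simp [inner_self_eq_norm_sq_to_K, hb]
    exact_mod_cast this
  have htle : ∀ j, t j ≤ (Module.finrank ℂ (W j) : ℝ) * ∑ g, ‖⟪b, ρ g b⟫_ℂ‖ ^ 2 := by
    intro j
    have : t j = ‖∑ g, repChar (σ j) g * ⟪b, ρ g b⟫_ℂ ^ 2‖ := by
      rw [ht, Complex.norm_real, Real.norm_of_nonneg (ht0 j)]
    rw [this, Finset.mul_sum]
    refine (norm_sum_le _ _).trans (Finset.sum_le_sum fun g _ => ?_)
    rw [norm_mul, norm_pow]
    exact mul_le_mul_of_nonneg_right (aux_char_le _ (hfam.1 j) g) (by positivity)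
  have hterm : ∀ j, ‖repChar (σ j) m₀‖ * t j ≤ lam * ((Module.finrank ℂ (W j) : ℝ) * t j) +
      if j ∈ Λ then (Module.finrank ℂ (W j) : ℝ) * t j else 0 := by
    intro j
    have h0 : 0 ≤ (Module.finrank ℂ (W j) : ℝ) * t j := mul_nonneg (Nat.cast_nonneg _) (ht0 j)
    by_cases hj : j ∈ Λ
    · simp only [hj, if_true]
      have := mul_le_mul_of_nonneg_right (aux_char_le _ (hfam.1 j) m₀) (ht0 j)
      have := mul_nonneg hlam h0
      linarith
    · simp only [hj, if_false]
      have := mul_le_mul_of_nonneg_right (hΛ j hj) (ht0 j)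
      linarith
  have hP : 0 ≤ ∑ j ∈ Λ, (Module.finrank ℂ (W j) : ℝ) ^ 2 / (Fintype.card G : ℝ) := by positivity
  calc (1 / (M.card : ℝ)) * ∑ m ∈ M, (⟪b, ρ m b⟫_ℂ).re ^ 2
      ≤ ‖(((1 / (M.card : ℝ)) * ∑ m ∈ M, (⟪b, ρ m b⟫_ℂ).re ^ 2 : ℝ) : ℂ)‖ := by
        rw [Complex.norm_real]; exact le_abs_self _
    _ ≤ (1 / (Fintype.card G : ℝ)) * ∑ j, ‖repChar (σ j) m₀‖ * t j := by
        rw [hE, norm_mul]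
        have : ‖(1 / (Fintype.card G : ℂ))‖ = 1 / (Fintype.card G : ℝ) := by simp
        rw [this]
        refine mul_le_mul_of_nonneg_left ?_ (by positivity)
        refine (norm_sum_le _ _).trans (Finset.sum_le_sum fun j _ => ?_)
        rw [norm_mul, Complex.norm_real, Real.norm_of_nonneg (ht0 j)]
    _ ≤ (1 / (Fintype.card G : ℝ)) * (lam * Fintype.card G +
          ∑ j ∈ Λ, (Module.finrank ℂ (W j) : ℝ) * t j) := by
        refine mul_le_mul_of_nonneg_left ?_ (by positivity)
        refine (Finset.sum_le_sum fun j _ => hterm j).trans (le_of_eq ?_)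
        rw [Finset.sum_add_distrib, ← Finset.mul_sum, h1]
        simp
    _ ≤ (1 / (Fintype.card G : ℝ)) * (lam * Fintype.card G +
          ∑ j ∈ Λ, (Module.finrank ℂ (W j) : ℝ) *
            ((Module.finrank ℂ (W j) : ℝ) * ∑ g, ‖⟪b, ρ g b⟫_ℂ‖ ^ 2)) := by
        refine mul_le_mul_of_nonneg_left ?_ (by positivity)
        gcongr with j _
        exact htle j
    _ = lam + (∑ j ∈ Λ, (Module.finrank ℂ (W j) : ℝ) ^ 2 / (Fintype.card G : ℝ)) *
          ∑ g, ‖⟪b, ρ g b⟫_ℂ‖ ^ 2 := by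
        rw [mul_add, Finset.mul_sum, Finset.sum_mul]
        congr 1
        · field_simp
        · refine Finset.sum_congr rfl fun j _ => ?_
          ring
    _ ≤ _ := by
        have := mul_le_mul_of_nonneg_left (aux_parseval W σ hfam ρ hρ b hb) hP
        linarith

lemma aux_proj {G V : Type*} [Group G] [NormedAddCommGroup V] [InnerProductSpace ℂ V] {k : ℕ}
    (ρ : Representation ℂ (Fin k → G) V) (hρ : IsUnitaryRep ρ) (m : G) (hm : m * m = 1) (b : V) :
    ‖invProj ρ m b‖ ^ 2 = ((2 : ℝ) ^ k)⁻¹ * ∑ I : Finset (Fin k), (⟪b, ρ (onI m I) b⟫_ℂ).re := by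
  classical
  have hinv : m⁻¹ = m := inv_eq_of_mul_eq_one_left hm
  have h1 : ∀ I I' : Finset (Fin k), (onI m I)⁻¹ * onI m I' = onI m (symmDiff I I') := by
    intro I I'
    ext i
    by_cases h : i ∈ I <;> by_cases h' : i ∈ I' <;>
      simp [onI, h, h', Finset.mem_symmDiff, hinv, hm]
  have h2 : ⟪∑ I : Finset (Fin k), ρ (onI m I) b, ∑ I : Finset (Fin k), ρ (onI m I) b⟫_ℂ
      = (2 : ℂ) ^ k * ∑ I : Finset (Fin k), ⟪b, ρ (onI m I) b⟫_ℂ := by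
    rw [sum_inner]
    simp only [inner_sum, aux_unit ρ hρ, h1]
    have : ∀ I : Finset (Fin k), ∑ I' : Finset (Fin k), ⟪b, ρ (onI m (symmDiff I I')) b⟫_ℂ
        = ∑ I : Finset (Fin k), ⟪b, ρ (onI m I) b⟫_ℂ := by
      intro I
      refine Fintype.sum_equiv ⟨fun I' => symmDiff I I', fun I' => symmDiff I I', ?_, ?_⟩ _ _ ?_
      · intro x; simp
      · intro x; simp
      · intro x; rfl
    simp [this]
  have h3 : invProj ρ m b = ((2 : ℂ) ^ k)⁻¹ • ∑ I : Finset (Fin k), ρ (onI m I) b := by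
    simp [invProj]
  have h4 : ((‖∑ I : Finset (Fin k), ρ (onI m I) b‖ ^ 2 : ℝ) : ℂ)
      = (2 : ℂ) ^ k * ∑ I : Finset (Fin k), ⟪b, ρ (onI m I) b⟫_ℂ := by
    rw [← h2, inner_self_eq_norm_sq_to_K]
    push_cast; rfl
  have h5 : ‖∑ I : Finset (Fin k), ρ (onI m I) b‖ ^ 2
      = (2 : ℝ) ^ k * ∑ I : Finset (Fin k), (⟪b, ρ (onI m I) b⟫_ℂ).re := by
    have := congrArg Complex.re h4
    rw [Complex.ofReal_re] at this
    rw [this]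
    have h6 : ((2 : ℂ) ^ k) = (((2 : ℝ) ^ k : ℝ) : ℂ) := by push_cast; rfl
    rw [h6, Complex.re_ofReal_mul, Complex.re_sum]
  rw [h3, norm_smul, mul_pow, h5]
  simp only [norm_inv, norm_pow, Complex.norm_ofNat]
  field_simp

lemma aux_var {G S : Type*} [Fintype S] [Nonempty S] (M : Finset G) (hM : M.Nonempty)
    (X : S → G → ℝ) (c : ℝ) (hc : c = (Fintype.card S : ℝ)⁻¹) :
    (1 / (M.card : ℝ)) * ∑ m ∈ M, (c * ∑ s, X s m) ^ 2
      - ((1 / (M.card : ℝ)) * ∑ m ∈ M, c * ∑ s, X s m) ^ 2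
    ≤ c * ∑ s, ((1 / (M.card : ℝ)) * ∑ m ∈ M, X s m ^ 2
      - ((1 / (M.card : ℝ)) * ∑ m ∈ M, X s m) ^ 2) := by
  have hMc : (0 : ℝ) < M.card := by exact_mod_cast hM.card_pos
  have hS : (0 : ℝ) < Fintype.card S := by exact_mod_cast Fintype.card_pos
  have var : ∀ Y : G → ℝ, (1 / (M.card : ℝ)) * ∑ m ∈ M, Y m ^ 2
      - ((1 / (M.card : ℝ)) * ∑ m ∈ M, Y m) ^ 2
      = (1 / (M.card : ℝ)) * ∑ m ∈ M, (Y m - (1 / (M.card : ℝ)) * ∑ m ∈ M, Y m) ^ 2 := by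
    intro Y
    set a := (1 / (M.card : ℝ)) * ∑ m ∈ M, Y m with ha
    have h1 : ∑ m ∈ M, Y m = M.card * a := by rw [ha]; field_simp
    have h2 : ∑ m ∈ M, (Y m - a) ^ 2 = ∑ m ∈ M, Y m ^ 2 - 2 * a * ∑ m ∈ M, Y m + M.card * a ^ 2 := by
      simp only [sub_sq, Finset.sum_add_distrib, Finset.sum_sub_distrib, Finset.mul_sum]
      simp only [Finset.sum_const, nsmul_eq_mul]
      congr 2
      exact Finset.sum_congr rfl fun m _ => by ring
    clear_value a
    rw [h2, h1]
    generalize ∑ m ∈ M, Y m ^ 2 = q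
    have h3 : 1 / (M.card : ℝ) * M.card = 1 := one_div_mul_cancel hMc.ne'
    linear_combination a ^ 2 * h3
  rw [var (fun m => c * ∑ s, X s m), Finset.sum_congr rfl fun s _ => var (X s)]
  have hre : c * ∑ s, 1 / (M.card : ℝ) * ∑ m ∈ M, (X s m - 1 / (M.card : ℝ) * ∑ m ∈ M, X s m) ^ 2
      = 1 / (M.card : ℝ) * (c * ∑ m ∈ M, ∑ s, (X s m - 1 / (M.card : ℝ) * ∑ m ∈ M, X s m) ^ 2) := by
    rw [← Finset.mul_sum, Finset.sum_comm, mul_left_comm]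
  rw [hre]
  have hpos : (0 : ℝ) ≤ 1 / (M.card : ℝ) := by positivity
  refine mul_le_mul_of_nonneg_left ?_ hpos
  rw [Finset.mul_sum M (fun m => ∑ s, (X s m - 1 / (M.card : ℝ) * ∑ m ∈ M, X s m) ^ 2) c]
  refine Finset.sum_le_sum fun m _ => ?_
  have h1 : c * ∑ s, X s m - (1 / (M.card : ℝ)) * ∑ m ∈ M, c * ∑ s, X s m
      = c * ∑ s, (X s m - (1 / (M.card : ℝ)) * ∑ m ∈ M, X s m) := by
    rw [Finset.sum_sub_distrib, ← Finset.mul_sum, ← Finset.mul_sum, Finset.sum_comm]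
    ring
  rw [h1, mul_pow]
  have h2 := sq_sum_le_card_mul_sum_sq (s := (Finset.univ : Finset S))
    (f := fun s => X s m - (1 / (M.card : ℝ)) * ∑ m ∈ M, X s m)
  rw [Finset.card_univ] at h2
  calc _ ≤ c ^ 2 * (Fintype.card S * ∑ s, (X s m - (1 / (M.card : ℝ)) * ∑ m ∈ M, X s m) ^ 2) :=
        mul_le_mul_of_nonneg_left h2 (sq_nonneg c)
    _ = _ := by
        have h4 : c * Fintype.card S = 1 := by rw [hc]; exact inv_mul_cancel₀ hS.ne'
        rw [sq, mul_assoc, ← mul_assoc c (Fintype.card S : ℝ), h4, one_mul]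

def auxHom (G : Type*) [Group G] {k : ℕ} (I : Finset (Fin k)) : G →* (Fin k → G) where
  toFun g := onI g I
  map_one' := by ext i; simp [onI]
  map_mul' a b := by
    ext i
    by_cases h : i ∈ I <;> simp [onI, h]

/-- Variance bound (Lemma 9 of the paper): the Plancherel- and basis-average of
`Var_m ‖Π_m^{(i)} b‖²` is at most `λ + P(Λ) Σ_j d_j`. -/
theorem stmt14 {G : Type*} [Group G] [Fintype G]
    {J : Type*} [Fintype J]
    (W : J → Type*) [∀ j, NormedAddCommGroup (W j)] [∀ j, InnerProductSpace ℂ (W j)]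
    [∀ j, FiniteDimensional ℂ (W j)]
    (σ : ∀ j, Representation ℂ G (W j)) (hfam : IsCompleteFamily W σ)
    (M : Finset G) (m₀ : G) (hm₀M : m₀ ∈ M)
    (hM : ∀ m : G, m ∈ M ↔ IsConj m₀ m)
    (hinv : ∀ m ∈ M, m * m = 1 ∧ m ≠ 1)
    {k : ℕ} (hk : 1 ≤ k)
    {T : Type*} [Fintype T]
    (Vi : T → Type*) [∀ i, NormedAddCommGroup (Vi i)] [∀ i, InnerProductSpace ℂ (Vi i)]
    [∀ i, FiniteDimensional ℂ (Vi i)]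
    (ρi : ∀ i, Representation ℂ (Fin k → G) (Vi i)) (hfam' : IsCompleteFamily Vi ρi)
    (ι : T → Type*) [∀ i, Fintype (ι i)] (B : ∀ i, OrthonormalBasis (ι i) ℂ (Vi i))
    (Λ : Finset J) (lam : ℝ) (hlam : 0 ≤ lam)
    (hΛ : ∀ j ∉ Λ, ‖repChar (σ j) m₀‖ ≤ lam * (Module.finrank ℂ (W j) : ℝ)) :
    ∑ i, (Module.finrank ℂ (Vi i) : ℝ) ^ 2 / (Fintype.card G : ℝ) ^ k *
        ((1 / (Module.finrank ℂ (Vi i) : ℝ)) *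
          ∑ x : ι i,
            ((1 / (M.card : ℝ)) * ∑ m ∈ M, (‖invProj (ρi i) m (B i x)‖ ^ 2) ^ 2
              - ((1 / (M.card : ℝ)) * ∑ m ∈ M, ‖invProj (ρi i) m (B i x)‖ ^ 2) ^ 2))
      ≤ lam + (∑ j ∈ Λ, (Module.finrank ℂ (W j) : ℝ) ^ 2 / (Fintype.card G : ℝ)) *
          ∑ j, (Module.finrank ℂ (W j) : ℝ) := by
  classical
  have hMne : M.Nonempty := ⟨m₀, hm₀M⟩
  have hMc : (0 : ℝ) < M.card := by exact_mod_cast hMne.card_pos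
  have hG : (0 : ℝ) < Fintype.card G := by exact_mod_cast Fintype.card_pos
  have hcardS : ((2 : ℝ) ^ k)⁻¹ = (Fintype.card (Finset (Fin k)) : ℝ)⁻¹ := by
    simp
  have hGk : (Fintype.card (Fin k → G) : ℝ) = (Fintype.card G : ℝ) ^ k := by simp
  have hGkC : (Fintype.card (Fin k → G) : ℂ) = (Fintype.card G : ℂ) ^ k := by simp
  have hw : ∀ d N y : ℝ, d ^ 2 / N * (1 / d * y) = d / N * y := by
    intro d N y
    by_cases hd : d = 0
    · simp [hd]
    · field_simp
  simp only [hw]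
  set N : ℝ := (Fintype.card G : ℝ) ^ k with hN
  have hNpos : 0 < N := by positivity
  set P : ℝ := ∑ j ∈ Λ, (Module.finrank ℂ (W j) : ℝ) ^ 2 / (Fintype.card G : ℝ) with hP
  have hP0 : 0 ≤ P := by positivity
  set D : ℝ := ∑ j, (Module.finrank ℂ (W j) : ℝ) with hD
  have hD0 : 0 ≤ D := by positivity
  set R : ℝ := lam + P * D with hR
  have hR0 : 0 ≤ R := by positivity
  let X : ∀ i, ι i → Finset (Fin k) → G → ℝ :=
    fun i x I g => (⟪B i x, ρi i (onI g I) (B i x)⟫_ℂ).re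
  let Va : ∀ i, ι i → Finset (Fin k) → ℝ := fun i x I =>
    (1 / (M.card : ℝ)) * ∑ m ∈ M, X i x I m ^ 2 - ((1 / (M.card : ℝ)) * ∑ m ∈ M, X i x I m) ^ 2
  have hcardi : ∀ i, (Fintype.card (ι i) : ℝ) = Module.finrank ℂ (Vi i) := by
    intro i
    rw [Module.finrank_eq_card_basis (B i).toBasis]
  have havgC : ∀ h : Fin k → G, ∑ i, ((Module.finrank ℂ (Vi i) : ℝ) / N : ℝ) *
      ∑ x, ⟪B i x, ρi i h (B i x)⟫_ℂ = if h = 1 then (1 : ℂ) else 0 := by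
    intro h
    have h1 := aux_regular Vi ρi hfam' h
    have hNC : (N : ℂ) ≠ 0 := by exact_mod_cast hNpos.ne'
    have h2 : (Fintype.card (Fin k → G) : ℂ) = (N : ℂ) := by rw [hGkC, hN]; push_cast; rfl
    calc _ = (N : ℂ)⁻¹ * ∑ i, (Module.finrank ℂ (Vi i) : ℂ) * repChar (ρi i) h := by
          rw [Finset.mul_sum]
          refine Finset.sum_congr rfl fun i _ => ?_
          rw [aux_char_sum (B i)]
          push_cast
          ring
      _ = _ := by
          rw [h1, h2]
          split_ifs <;> simp [hNC]
  have hone : ∑ i, (Module.finrank ℂ (Vi i) : ℝ) / N * ∑ x : ι i, (1 : ℝ) = 1 := by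
    have h1 := havgC 1
    simp only [map_one, Module.End.one_apply, if_true] at h1
    have h2 : ∀ i, ∑ x, ⟪B i x, B i x⟫_ℂ = ((∑ x : ι i, (1 : ℝ) : ℝ) : ℂ) := by
      intro i
      push_cast
      refine Finset.sum_congr rfl fun x _ => ?_
      rw [inner_self_eq_norm_sq_to_K, (B i).norm_eq_one]
      simp
    simp only [h2] at h1
    exact_mod_cast h1
  have key : ∀ I : Finset (Fin k),
      ∑ i, (Module.finrank ℂ (Vi i) : ℝ) / N * ∑ x : ι i, Va i x I ≤ R := by
    intro I
    rcases I.eq_empty_or_nonempty with rfl | ⟨i₀, hi₀⟩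
    · have : ∀ i x, Va i x ∅ = 0 := by
        intro i x
        have h1 : ∀ g, X i x ∅ g = 1 := by
          intro g
          have : onI g (∅ : Finset (Fin k)) = 1 := by ext i; simp [onI]
          simp only [X, this, map_one, Module.End.one_apply]
          rw [inner_self_eq_norm_sq_to_K, (B i).norm_eq_one]
          simp
        simp only [Va, h1]
        simp [hMc.ne']
      simp only [this]
      simpa using hR0
    · let ρI : ∀ i, Representation ℂ G (Vi i) := fun i => (ρi i).comp (auxHom G I)
      have hρI : ∀ i, IsUnitaryRep (ρI i) := fun i g v w => hfam'.1 i _ v w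
      let Z : ∀ i, ι i → ℝ := fun i x =>
        ∑ j, (∑ g, repChar (σ j) g * ⟪B i x, ρI i g (B i x)⟫_ℂ).re
      have hb : ∀ i x, Va i x I ≤ lam * 1 + P * Z i x := by
        intro i x
        have h1 := aux_single W σ hfam M m₀ hm₀M hM hinv Λ lam hlam hΛ (ρI i) (hρI i) (B i x)
          ((B i).norm_eq_one x)
        have h2 : Va i x I ≤ (1 / (M.card : ℝ)) * ∑ m ∈ M, X i x I m ^ 2 :=
          sub_le_self _ (sq_nonneg _)
        rw [mul_one]
        exact h2.trans h1
      have hZ : ∑ i, (Module.finrank ℂ (Vi i) : ℝ) / N * ∑ x : ι i, Z i x = D := by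
        have hC : ∑ i, ((Module.finrank ℂ (Vi i) : ℝ) / N : ℝ) *
            ∑ x : ι i, ∑ j, ∑ g, repChar (σ j) g * ⟪B i x, ρI i g (B i x)⟫_ℂ = (D : ℂ) := by
          calc _ = ∑ j, ∑ g, repChar (σ j) g * ∑ i, ((Module.finrank ℂ (Vi i) : ℝ) / N : ℝ) *
                ∑ x, ⟪B i x, ρi i (onI g I) (B i x)⟫_ℂ := by
                simp only [Finset.mul_sum]
                have : ∀ i, ∑ x : ι i, ∑ j, ∑ g, (((Module.finrank ℂ (Vi i) : ℝ) / N : ℝ) : ℂ) *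
                    (repChar (σ j) g * ⟪B i x, ρI i g (B i x)⟫_ℂ)
                    = ∑ j, ∑ g, ∑ x : ι i, repChar (σ j) g *
                      ((((Module.finrank ℂ (Vi i) : ℝ) / N : ℝ) : ℂ) *
                        ⟪B i x, ρi i (onI g I) (B i x)⟫_ℂ) := by
                  intro i
                  rw [Finset.sum_comm]
                  refine Finset.sum_congr rfl fun j _ => ?_
                  rw [Finset.sum_comm]
                  refine Finset.sum_congr rfl fun g _ => Finset.sum_congr rfl fun x _ => ?_
                  exact mul_left_comm _ _ _
                rw [Finset.sum_congr rfl fun i _ => this i, Finset.sum_comm]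
                refine Finset.sum_congr rfl fun j _ => ?_
                rw [Finset.sum_comm]
            _ = ∑ j, ∑ g, repChar (σ j) g * if g = 1 then 1 else 0 := by
                refine Finset.sum_congr rfl fun j _ => Finset.sum_congr rfl fun g _ => ?_
                rw [havgC]
                have : onI g I = 1 ↔ g = 1 := by
                  constructor
                  · intro h
                    have := congrFun h i₀
                    simpa [onI, hi₀] using this
                  · rintro rfl
                    ext i; simp [onI]
                simp only [this]
            _ = _ := by
                simp [repChar, hD]
        have h3 := congrArg Complex.re hC
        rw [Complex.ofReal_re, Complex.re_sum] at h3
        rw [← h3]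
        refine Finset.sum_congr rfl fun i _ => ?_
        rw [Complex.re_ofReal_mul]
        simp only [Z, Complex.re_sum]
      calc _ ≤ ∑ i, (Module.finrank ℂ (Vi i) : ℝ) / N * ∑ x : ι i, (lam * 1 + P * Z i x) := by
            refine Finset.sum_le_sum fun i _ => mul_le_mul_of_nonneg_left ?_ (by positivity)
            exact Finset.sum_le_sum fun x _ => hb i x
        _ = lam * ∑ i, (Module.finrank ℂ (Vi i) : ℝ) / N * ∑ x : ι i, (1 : ℝ)
            + P * ∑ i, (Module.finrank ℂ (Vi i) : ℝ) / N * ∑ x : ι i, Z i x := by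
            rw [Finset.mul_sum, Finset.mul_sum, ← Finset.sum_add_distrib]
            refine Finset.sum_congr rfl fun i _ => ?_
            rw [Finset.sum_add_distrib, ← Finset.mul_sum, ← Finset.mul_sum]
            ring
        _ = R := by rw [hone, hZ, hR, mul_one]
  calc _ ≤ ∑ i, (Module.finrank ℂ (Vi i) : ℝ) / N *
          ∑ x : ι i, ((2 : ℝ) ^ k)⁻¹ * ∑ I : Finset (Fin k), Va i x I := by
        refine Finset.sum_le_sum fun i _ => mul_le_mul_of_nonneg_left ?_ (by positivity)
        refine Finset.sum_le_sum fun x _ => ?_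
        have hp : ∀ m ∈ M, ‖invProj (ρi i) m (B i x)‖ ^ 2
            = ((2 : ℝ) ^ k)⁻¹ * ∑ I : Finset (Fin k), X i x I m := fun m hm =>
          aux_proj (ρi i) (hfam'.1 i) m (hinv m hm).1 (B i x)
        have h1 : ∑ m ∈ M, (‖invProj (ρi i) m (B i x)‖ ^ 2) ^ 2
            = ∑ m ∈ M, (((2 : ℝ) ^ k)⁻¹ * ∑ I : Finset (Fin k), X i x I m) ^ 2 :=
          Finset.sum_congr rfl fun m hm => by rw [hp m hm]
        rw [h1, Finset.sum_congr rfl hp]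
        exact aux_var M hMne (X i x) _ hcardS
    _ = ((2 : ℝ) ^ k)⁻¹ * ∑ I : Finset (Fin k),
          ∑ i, (Module.finrank ℂ (Vi i) : ℝ) / N * ∑ x : ι i, Va i x I := by
        rw [Finset.sum_comm, Finset.mul_sum]
        refine Finset.sum_congr rfl fun i _ => ?_
        rw [← Finset.mul_sum, ← Finset.mul_sum, Finset.sum_comm]
        ring
    _ ≤ ((2 : ℝ) ^ k)⁻¹ * ∑ I : Finset (Fin k), R := by
        refine mul_le_mul_of_nonneg_left ?_ (by positivity)
        exact Finset.sum_le_sum fun I _ => key I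
    _ = R := by
        simp
end
end
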